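/- arXiv:0810.1195 — 2 statements merged into one kernel-verified Lean document; each statement's English description precedes it below -/
import Mathlib

section
/- Let E′ > 0. For every tempered distribution F on ℝ (i.e. every continuous linear functional on the Schwartz space 𝒮(ℝ)) and every Schwartz function φ, the Parseval-type expansion holds: the series Σ_{n=0}^∞ F(ψ_n) · (∫_ℝ ψ_n(q) φ(q) dq) converges and equals F(φ). -/
open MeasureTheory Filter Complex

/-- Physicists' Hermite polynomials (real version). -/
noncomputable def hermitePolyR : ℕ → ℝ → ℝ
  | 0, _ => 1
  | 1, y => 2 * y
  | (n + 2), y => 2 * y * hermitePolyR (n + 1) y - 2 * (n + 1) * hermitePolyR n y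

/-- The `L²`-normalized Hermite (harmonic-oscillator) functions. -/
noncomputable def hermiteFn (E' : ℝ) (n : ℕ) (q : ℝ) : ℝ :=
  (E' / Real.pi) ^ ((1 : ℝ) / 4) * (Real.sqrt (2 ^ n * n.factorial))⁻¹ *
    Real.exp (-(E' * q ^ 2) / 2) * hermitePolyR n (Real.sqrt E' * q)

/-!
The rank-one operators `P n : φ ↦ (∫ ψ_n φ) ψ_n` are shifted by the ladder operators
`A = E x + d/dx` and `B = E x - d/dx`: `A ∘ P (n + 1) = P n ∘ A` and `B ∘ P n = P (n + 1) ∘ B`.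
Since `x` and `d/dx` are combinations of `A` and `B`, summability of `p (P n φ)` for all `φ` passes
from a seminorm `p` to `p ∘ x` and `p ∘ d/dx`, so that every Schwartz seminorm is reduced to the
sup norm. There the series converges because `ψ_n` grows at most polynomially, while the
coefficients decay faster than any power of `n`: `A B` multiplies the `n`-th coefficient by
`2 E (n + 1)`. Hence `∑ P n φ` converges in the Schwartz space, to a function with the same
coefficients as `φ`. If all coefficients of `h` vanish, then so do those of `x h`, hence all moments
of `ψ_0 h`; the Gaussian decay of `ψ_0` makes the Fourier transform of `ψ_0 h` the sum of its
moment series, so `h = 0`.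
-/

open scoped SchwartzMap

section SchwartzSeries

variable {ι 𝕜 E F : Type*} [NormedAddCommGroup E] [NormedSpace ℝ E]
  [NormedAddCommGroup F] [NormedSpace ℝ F] [NormedField 𝕜] [NormedSpace 𝕜 F] [SMulCommClass ℝ 𝕜 F]

lemma norm_iteratedFDeriv_le_schwartzSeminorm (f : 𝓢(E, F)) (n : ℕ) (x : E) :
    ‖iteratedFDeriv ℝ n f x‖ ≤ SchwartzMap.seminorm 𝕜 0 n f := by
  simpa using SchwartzMap.le_seminorm 𝕜 0 n f x

variable [CompleteSpace F]

lemma pow_mul_norm_iteratedFDeriv_tsum_le_tsum_seminorm {f : ι → 𝓢(E, F)}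
    (hf : ∀ k n : ℕ, Summable fun i => SchwartzMap.seminorm 𝕜 k n (f i)) (k n : ℕ) (x : E) :
    ‖x‖ ^ k * ‖iteratedFDeriv ℝ n (fun y => ∑' i, f i y) x‖ ≤
      ∑' i, SchwartzMap.seminorm 𝕜 k n (f i) := by
  have hderiv : iteratedFDeriv ℝ n (fun y => ∑' i, f i y) x = ∑' i, iteratedFDeriv ℝ n (f i) x :=
    iteratedFDeriv_tsum_apply (N := ⊤) (fun i => (f i).smooth') (fun m _ => hf 0 m)
      (fun m i y _ => norm_iteratedFDeriv_le_schwartzSeminorm (f i) m y) (mod_cast le_top) x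
  calc ‖x‖ ^ k * ‖iteratedFDeriv ℝ n (fun y => ∑' i, f i y) x‖
      = ‖∑' i, ‖x‖ ^ k • iteratedFDeriv ℝ n (f i) x‖ := by
        rw [hderiv, tsum_const_smul'', norm_smul, norm_pow, norm_norm]
    _ ≤ ∑' i, SchwartzMap.seminorm 𝕜 k n (f i) := by
        refine tsum_of_norm_bounded (hf k n).hasSum fun i => ?_
        rw [norm_smul, norm_pow, norm_norm]
        exact SchwartzMap.le_seminorm 𝕜 k n (f i) x

/-- The pointwise sum of a family of Schwartz functions all of whose seminorms are summable. -/
noncomputable def schwartzTsum (f : ι → 𝓢(E, F))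
    (hf : ∀ k n : ℕ, Summable fun i => SchwartzMap.seminorm 𝕜 k n (f i)) : 𝓢(E, F) where
  toFun x := ∑' i, f i x
  smooth' := contDiff_tsum (N := ⊤) (fun i => (f i).smooth') (fun m _ => hf 0 m)
    fun m i y _ => norm_iteratedFDeriv_le_schwartzSeminorm (f i) m y
  decay' k n := ⟨_, pow_mul_norm_iteratedFDeriv_tsum_le_tsum_seminorm hf k n⟩

lemma schwartzTsum_sub_sum_apply {f : ι → 𝓢(E, F)}
    (hf : ∀ k n : ℕ, Summable fun i => SchwartzMap.seminorm 𝕜 k n (f i)) (s : Finset ι) (x : E) :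
    (schwartzTsum f hf - ∑ i ∈ s, f i) x = ∑' i : {i // i ∉ s}, f i x := by
  have hx : Summable fun i => f i x :=
    (hf 0 0).of_norm_bounded fun i => (f i).norm_le_seminorm 𝕜 x
  rw [sub_apply, sum_apply, sub_eq_iff_eq_add']
  exact (hx.sum_add_tsum_subtype_compl s).symm

lemma seminorm_schwartzTsum_sub_sum_le {f : ι → 𝓢(E, F)}
    (hf : ∀ k n : ℕ, Summable fun i => SchwartzMap.seminorm 𝕜 k n (f i)) (k n : ℕ) (s : Finset ι) :
    SchwartzMap.seminorm 𝕜 k n (schwartzTsum f hf - ∑ i ∈ s, f i) ≤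
      ∑' i : {i // i ∉ s}, SchwartzMap.seminorm 𝕜 k n (f i) := by
  refine SchwartzMap.seminorm_le_bound 𝕜 k n _ (tsum_nonneg fun i => apply_nonneg _ _) fun x => ?_
  rw [funext (schwartzTsum_sub_sum_apply hf s)]
  exact pow_mul_norm_iteratedFDeriv_tsum_le_tsum_seminorm
    (fun k n => (hf k n).comp_injective Subtype.val_injective) k n x

lemma summable_of_summable_schwartzSeminorm {f : ι → 𝓢(E, F)}
    (hf : ∀ k n : ℕ, Summable fun i => SchwartzMap.seminorm 𝕜 k n (f i)) : Summable f := by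
  refine ⟨schwartzTsum f hf, ((schwartz_withSeminorms 𝕜 E F).tendsto_nhds _ _).2 fun kn ε hε => ?_⟩
  have htail := (tendsto_tsum_compl_atTop_zero fun i =>
    SchwartzMap.seminorm 𝕜 kn.1 kn.2 (f i)).eventually (gt_mem_nhds hε)
  filter_upwards [htail] with s hs
  rw [map_sub_rev]
  exact (seminorm_schwartzTsum_sub_sum_le hf kn.1 kn.2 s).trans_lt hs

end SchwartzSeries

section LadderOperators

/-- The multiplication operator `f ↦ x f` on `𝓢(ℝ, ℂ)`. -/
noncomputable def positionCLM : 𝓢(ℝ, ℂ) →L[ℂ] 𝓢(ℝ, ℂ) :=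
  SchwartzMap.smulLeftCLM ℂ fun x : ℝ => (x : ℂ)

/-- The annihilation operator `E x + d/dx` of the harmonic oscillator, not normalized. -/
noncomputable def annihilationCLM (E : ℝ) : 𝓢(ℝ, ℂ) →L[ℂ] 𝓢(ℝ, ℂ) :=
  (E : ℂ) • positionCLM + SchwartzMap.derivCLM ℂ ℂ

/-- The creation operator `E x - d/dx` of the harmonic oscillator, not normalized. -/
noncomputable def creationCLM (E : ℝ) : 𝓢(ℝ, ℂ) →L[ℂ] 𝓢(ℝ, ℂ) :=
  (E : ℂ) • positionCLM - SchwartzMap.derivCLM ℂ ℂ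

/-- The bilinear pairing `g ↦ ∫ x, f x * g x`, without complex conjugation. -/
noncomputable def integralPairing (f : 𝓢(ℝ, ℂ)) : 𝓢(ℝ, ℂ) →L[ℂ] ℂ :=
  SchwartzMap.integralCLM ℂ volume ∘L SchwartzMap.pairing (ContinuousLinearMap.mul ℂ ℂ) f

@[simp]
lemma positionCLM_apply (f : 𝓢(ℝ, ℂ)) (x : ℝ) : positionCLM f x = x * f x := by
  simp [positionCLM, SchwartzMap.smulLeftCLM_apply_apply
    (show (fun x : ℝ => (x : ℂ)).HasTemperateGrowth by fun_prop)]

lemma positionCLM_iterate_apply (k : ℕ) (f : 𝓢(ℝ, ℂ)) (x : ℝ) :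
    (positionCLM^[k] f) x = x ^ k * f x := by
  induction k with
  | zero => simp
  | succ k ih => rw [Function.iterate_succ_apply', positionCLM_apply, ih, pow_succ', mul_assoc]

lemma annihilationCLM_apply (E : ℝ) (f : 𝓢(ℝ, ℂ)) (x : ℝ) :
    annihilationCLM E f x = E * (x * f x) + deriv f x := by
  simp [annihilationCLM]

lemma creationCLM_apply (E : ℝ) (f : 𝓢(ℝ, ℂ)) (x : ℝ) :
    creationCLM E f x = E * (x * f x) - deriv f x := by
  simp [creationCLM]

lemma positionCLM_eq_smul_annihilationCLM_add_creationCLM {E : ℝ} (hE : E ≠ 0) (f : 𝓢(ℝ, ℂ)) :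
    positionCLM f = ((2 * E : ℝ) : ℂ)⁻¹ • (annihilationCLM E f + creationCLM E f) := by
  have hE' : (E : ℂ) ≠ 0 := mod_cast hE
  ext x
  simp only [positionCLM_apply, smul_apply, add_apply, annihilationCLM_apply, creationCLM_apply,
    smul_eq_mul]
  push_cast
  field_simp
  ring

lemma derivCLM_eq_smul_annihilationCLM_sub_creationCLM (E : ℝ) (f : 𝓢(ℝ, ℂ)) :
    SchwartzMap.derivCLM ℂ ℂ f = (2⁻¹ : ℂ) • (annihilationCLM E f - creationCLM E f) := by
  ext x
  simp only [SchwartzMap.derivCLM_apply, smul_apply, sub_apply, annihilationCLM_apply,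
    creationCLM_apply, smul_eq_mul]
  ring

lemma integralPairing_apply (f g : 𝓢(ℝ, ℂ)) : integralPairing f g = ∫ x, f x * g x := by
  simp [integralPairing, SchwartzMap.integralCLM_apply]

lemma integralPairing_comm (f g : 𝓢(ℝ, ℂ)) : integralPairing f g = integralPairing g f := by
  simp only [integralPairing_apply, mul_comm]

lemma integralPairing_smul_left (c : ℂ) (f g : 𝓢(ℝ, ℂ)) :
    integralPairing (c • f) g = c * integralPairing f g := by
  rw [integralPairing_comm, map_smul, integralPairing_comm, smul_eq_mul]

lemma integralPairing_positionCLM (f g : 𝓢(ℝ, ℂ)) :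
    integralPairing f (positionCLM g) = integralPairing (positionCLM f) g := by
  simp only [integralPairing_apply, positionCLM_apply, mul_left_comm, mul_assoc]

lemma integralPairing_derivCLM (f g : 𝓢(ℝ, ℂ)) :
    integralPairing f (SchwartzMap.derivCLM ℂ ℂ g) =
      -integralPairing (SchwartzMap.derivCLM ℂ ℂ f) g := by
  simp only [integralPairing_apply, SchwartzMap.derivCLM_apply]
  rw [SchwartzMap.integral_mul_deriv_eq_neg_deriv_mul]

lemma integralPairing_annihilationCLM (E : ℝ) (f g : 𝓢(ℝ, ℂ)) :
    integralPairing f (annihilationCLM E g) = integralPairing (creationCLM E f) g := by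
  calc integralPairing f (annihilationCLM E g)
      = E * integralPairing f (positionCLM g) +
          integralPairing f (SchwartzMap.derivCLM ℂ ℂ g) := by simp [annihilationCLM]
    _ = E * integralPairing g (positionCLM f) -
          integralPairing g (SchwartzMap.derivCLM ℂ ℂ f) := by
        rw [integralPairing_positionCLM, integralPairing_derivCLM, integralPairing_comm g,
          integralPairing_comm g, sub_eq_add_neg]
    _ = integralPairing (creationCLM E f) g := by
        rw [integralPairing_comm _ g]
        simp [creationCLM]

lemma integralPairing_creationCLM (E : ℝ) (f g : 𝓢(ℝ, ℂ)) :
    integralPairing f (creationCLM E g) = integralPairing (annihilationCLM E f) g := by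
  rw [integralPairing_comm, ← integralPairing_annihilationCLM, integralPairing_comm]

/-- The rank-one operator `g ↦ (∫ x, f x * g x) • f`; it is a projection when
`∫ x, f x * f x = 1`. -/
noncomputable def rankOneCLM (f : 𝓢(ℝ, ℂ)) : 𝓢(ℝ, ℂ) →L[ℂ] 𝓢(ℝ, ℂ) :=
  (integralPairing f).smulRight f

lemma rankOneCLM_apply (f g : 𝓢(ℝ, ℂ)) : rankOneCLM f g = integralPairing f g • f := rfl

lemma schwartzSeminorm_succ_zero_le (k : ℕ) (f : 𝓢(ℝ, ℂ)) :
    SchwartzMap.seminorm ℂ (k + 1) 0 f ≤ SchwartzMap.seminorm ℂ k 0 (positionCLM f) := by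
  refine SchwartzMap.seminorm_le_bound ℂ _ _ _ (apply_nonneg _ _) fun x => ?_
  have h := SchwartzMap.le_seminorm ℂ k 0 (positionCLM f) x
  simp only [norm_iteratedFDeriv_zero, positionCLM_apply, norm_mul, norm_real] at h ⊢
  rwa [pow_succ, mul_assoc]

lemma schwartzSeminorm_succ_right_le (k n : ℕ) (f : 𝓢(ℝ, ℂ)) :
    SchwartzMap.seminorm ℂ k (n + 1) f ≤
      SchwartzMap.seminorm ℂ k n (SchwartzMap.derivCLM ℂ ℂ f) := by
  refine SchwartzMap.seminorm_le_bound' ℂ _ _ _ (apply_nonneg _ _) fun x => ?_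
  have h := SchwartzMap.le_seminorm' ℂ k n (SchwartzMap.derivCLM ℂ ℂ f) x
  rwa [funext (SchwartzMap.derivCLM_apply ℂ f), ← iteratedDeriv_succ'] at h

end LadderOperators

section HermiteFunctions

lemma hasDerivAt_hermitePolyR (n : ℕ) (y : ℝ) :
    HasDerivAt (hermitePolyR n) (2 * y * hermitePolyR n y - hermitePolyR (n + 1) y) y := by
  induction n using Nat.twoStepInduction with
  | zero => simpa [hermitePolyR] using hasDerivAt_const y (1 : ℝ)
  | one =>
    refine ((hasDerivAt_id y).const_mul (2 : ℝ)).congr_deriv ?_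
    simp [hermitePolyR]
  | more n ih₀ ih₁ =>
    refine ((((hasDerivAt_id y).const_mul (2 : ℝ)).mul ih₁).sub
      (ih₀.const_mul (2 * ((n : ℝ) + 1)))).congr_deriv ?_
    simp only [hermitePolyR, id]
    push_cast
    ring

/-- The factor by which the ladder operators move between `hermiteFn E n` and
`hermiteFn E (n + 1)`. -/
noncomputable def ladderCoeff (E : ℝ) (n : ℕ) : ℝ := √(2 * E * (n + 1))

lemma ladderCoeff_mul_self {E : ℝ} (hE : 0 ≤ E) (n : ℕ) :
    ladderCoeff E n * ladderCoeff E n = 2 * E * (n + 1) :=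
  Real.mul_self_sqrt (by positivity)

lemma ladderCoeff_ne_zero {E : ℝ} (hE : 0 < E) (n : ℕ) : ladderCoeff E n ≠ 0 := by
  unfold ladderCoeff
  positivity

lemma ladderCoeff_eq_sqrt_mul_sqrt {E : ℝ} (hE : 0 ≤ E) (n : ℕ) :
    ladderCoeff E n = √E * √(2 * (n + 1)) := by
  rw [ladderCoeff, ← Real.sqrt_mul hE]
  ring_nf

lemma inv_sqrt_two_pow_mul_factorial_eq (n : ℕ) :
    (√(2 ^ n * n.factorial))⁻¹ =
      √(2 * (n + 1)) * (√(2 ^ (n + 1) * (n + 1).factorial))⁻¹ := by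
  have hfact : (2 : ℝ) ^ (n + 1) * (n + 1).factorial = 2 * (n + 1) * (2 ^ n * n.factorial) := by
    rw [Nat.factorial_succ]
    push_cast
    ring
  have hne : √(2 * ((n : ℝ) + 1)) ≠ 0 := by positivity
  rw [hfact, Real.sqrt_mul (by positivity) (2 ^ n * (n.factorial : ℝ)), mul_inv,
    mul_inv_cancel_left₀ hne]

lemma ladderCoeff_mul_hermiteFn_succ {E : ℝ} (hE : 0 ≤ E) (n : ℕ) (q : ℝ) :
    ladderCoeff E n * hermiteFn E (n + 1) q =
      (E / Real.pi) ^ ((1 : ℝ) / 4) * (√(2 ^ n * n.factorial))⁻¹ * Real.exp (-(E * q ^ 2) / 2) *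
        (√E * hermitePolyR (n + 1) (√E * q)) := by
  rw [hermiteFn, ladderCoeff_eq_sqrt_mul_sqrt hE, inv_sqrt_two_pow_mul_factorial_eq n]
  ring

lemma hasDerivAt_hermiteFn {E : ℝ} (hE : 0 ≤ E) (n : ℕ) (q : ℝ) :
    HasDerivAt (hermiteFn E n) (E * q * hermiteFn E n q - ladderCoeff E n * hermiteFn E (n + 1) q)
      q := by
  have hexp : HasDerivAt (fun q : ℝ => Real.exp (-(E * q ^ 2) / 2))
      (Real.exp (-(E * q ^ 2) / 2) * (-(E * (2 * q)) / 2)) q := by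
    simpa using (((hasDerivAt_pow 2 q).const_mul E).neg.div_const 2).exp
  have hpoly := (hasDerivAt_hermitePolyR n (√E * q)).comp q ((hasDerivAt_id q).const_mul √E)
  refine ((hexp.const_mul ((E / Real.pi) ^ ((1 : ℝ) / 4) * (√(2 ^ n * n.factorial))⁻¹)).mul
    hpoly).congr_deriv ?_
  rw [ladderCoeff_mul_hermiteFn_succ hE, hermiteFn]
  simp only [Function.comp_apply]
  linear_combination 2 * q * (E / Real.pi) ^ ((1 : ℝ) / 4) * (√(2 ^ n * n.factorial))⁻¹ *
    Real.exp (-(E * q ^ 2) / 2) * hermitePolyR n (√E * q) * Real.mul_self_sqrt hE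

lemma ladderCoeff_mul_hermiteFn_one {E : ℝ} (hE : 0 ≤ E) (q : ℝ) :
    ladderCoeff E 0 * hermiteFn E 1 q = 2 * E * q * hermiteFn E 0 q := by
  rw [ladderCoeff_mul_hermiteFn_succ hE, hermiteFn]
  simp only [hermitePolyR]
  linear_combination 2 * q * (E / Real.pi) ^ ((1 : ℝ) / 4) * (√(2 ^ 0 * (0).factorial))⁻¹ *
    Real.exp (-(E * q ^ 2) / 2) * Real.mul_self_sqrt hE

lemma ladderCoeff_mul_hermiteFn_add_two {E : ℝ} (hE : 0 ≤ E) (n : ℕ) (q : ℝ) :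
    ladderCoeff E (n + 1) * hermiteFn E (n + 2) q =
      2 * E * q * hermiteFn E (n + 1) q - ladderCoeff E n * hermiteFn E n q := by
  have hsqrt : √(2 * ((n : ℝ) + 1)) * √(2 * ((n : ℝ) + 1)) = 2 * (n + 1) :=
    Real.mul_self_sqrt (by positivity)
  rw [ladderCoeff_mul_hermiteFn_succ hE, hermiteFn, hermiteFn, ladderCoeff_eq_sqrt_mul_sqrt hE n,
    inv_sqrt_two_pow_mul_factorial_eq n]
  simp only [hermitePolyR]
  set c := (E / Real.pi) ^ ((1 : ℝ) / 4) * (√(2 ^ (n + 1) * (n + 1).factorial))⁻¹ *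
    Real.exp (-(E * q ^ 2) / 2)
  linear_combination 2 * q * c * hermitePolyR (n + 1) (√E * q) * Real.mul_self_sqrt hE +
    √E * c * hermitePolyR n (√E * q) * hsqrt

lemma hermiteFn_zero (E q : ℝ) :
    hermiteFn E 0 q = (E / Real.pi) ^ ((1 : ℝ) / 4) * Real.exp (-(E * q ^ 2) / 2) := by
  simp [hermiteFn, hermitePolyR]

lemma integral_hermiteFn_zero_mul_self {E : ℝ} (hE : 0 < E) :
    ∫ q, hermiteFn E 0 q * hermiteFn E 0 q = 1 := by
  have hsq (q : ℝ) : hermiteFn E 0 q * hermiteFn E 0 q =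
      √(E / Real.pi) * Real.exp (-E * q ^ 2) := by
    have hconst : (E / Real.pi) ^ ((1 : ℝ) / 4) * (E / Real.pi) ^ ((1 : ℝ) / 4) =
        √(E / Real.pi) := by
      rw [← Real.rpow_add (by positivity), Real.sqrt_eq_rpow]
      norm_num
    have hexp : Real.exp (-(E * q ^ 2) / 2) * Real.exp (-(E * q ^ 2) / 2) =
        Real.exp (-E * q ^ 2) := by
      rw [← Real.exp_add]
      ring_nf
    rw [hermiteFn_zero, mul_mul_mul_comm, hconst, hexp]
  simp only [hsq]
  rw [integral_const_mul, integral_gaussian, ← Real.sqrt_mul (by positivity),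
    div_mul_div_cancel₀ Real.pi_ne_zero, div_self hE.ne', Real.sqrt_one]

end HermiteFunctions

section SupBound

variable {F : Type*} [NormedAddCommGroup F]

lemma integrable_norm_sq_schwartz [NormedSpace ℝ F] (f : 𝓢(ℝ, F)) :
    Integrable fun x => ‖f x‖ ^ 2 :=
  (f.memLp 2).integrable_norm_pow two_ne_zero

lemma norm_integralPairing_le (f g : 𝓢(ℝ, ℂ)) :
    ‖integralPairing f g‖ ≤ (∫ x, ‖f x‖ ^ 2) + ∫ x, ‖g x‖ ^ 2 := by
  have hf := integrable_norm_sq_schwartz f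
  have hg := integrable_norm_sq_schwartz g
  rw [integralPairing_apply, ← integral_add hf hg]
  refine norm_integral_le_of_norm_le (hf.add hg) (.of_forall fun x => ?_)
  rw [norm_mul]
  nlinarith [sq_nonneg (‖f x‖ - ‖g x‖), sq_nonneg ‖f x‖, sq_nonneg ‖g x‖]

lemma norm_sq_le_integral_norm_sq_add_integral_norm_deriv_sq [InnerProductSpace ℝ F]
    (f : 𝓢(ℝ, F)) (x : ℝ) : ‖f x‖ ^ 2 ≤ (∫ y, ‖f y‖ ^ 2) + ∫ y, ‖deriv f y‖ ^ 2 := by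
  have hf := integrable_norm_sq_schwartz f
  have hf' : Integrable fun y => ‖deriv f y‖ ^ 2 := by
    simpa using integrable_norm_sq_schwartz (SchwartzMap.derivCLM ℝ F f)
  have hdom (y : ℝ) : ‖2 * inner ℝ (f y) (deriv f y)‖ ≤ ‖f y‖ ^ 2 + ‖deriv f y‖ ^ 2 := by
    rw [norm_mul, Real.norm_two]
    nlinarith [norm_inner_le_norm (𝕜 := ℝ) (f y) (deriv f y), sq_nonneg (‖f y‖ - ‖deriv f y‖)]
  have hderiv (y : ℝ) :
      HasDerivAt (fun y => ‖f y‖ ^ 2) (2 * inner ℝ (f y) (deriv f y)) y :=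
    f.differentiableAt.hasDerivAt.norm_sq
  have hcont : Continuous fun y => 2 * inner ℝ (f y) (deriv f y) :=
    continuous_const.mul (f.continuous.inner (SchwartzMap.derivCLM ℝ F f).continuous)
  have hint : Integrable fun y => 2 * inner ℝ (f y) (deriv f y) :=
    (hf.add hf').mono' hcont.aestronglyMeasurable (.of_forall hdom)
  have hlim : Tendsto (fun y => ‖f y‖ ^ 2) atBot (nhds 0) := by
    simpa using ((zero_at_infty f).mono_left atBot_le_cocompact).norm.pow 2
  calc ‖f x‖ ^ 2 = ∫ y in Set.Iic x, 2 * inner ℝ (f y) (deriv f y) := by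
        rw [integral_Iic_of_hasDerivAt_of_tendsto' (fun y _ => hderiv y) hint.integrableOn hlim,
          sub_zero]
    _ ≤ ∫ y in Set.Iic x, ‖f y‖ ^ 2 + ‖deriv f y‖ ^ 2 :=
        setIntegral_mono hint.integrableOn (hf.add hf').integrableOn
          fun y => (le_abs_self _).trans (hdom y)
    _ ≤ ∫ y, ‖f y‖ ^ 2 + ‖deriv f y‖ ^ 2 :=
        setIntegral_le_integral (hf.add hf') (.of_forall fun y => by positivity)
    _ = (∫ y, ‖f y‖ ^ 2) + ∫ y, ‖deriv f y‖ ^ 2 := integral_add hf hf'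

lemma integral_norm_deriv_sq_le (E : ℝ) (f : 𝓢(ℝ, ℂ)) :
    ∫ x, ‖deriv f x‖ ^ 2 ≤
      ((∫ x, ‖annihilationCLM E f x‖ ^ 2) + ∫ x, ‖creationCLM E f x‖ ^ 2) / 2 := by
  have hA := integrable_norm_sq_schwartz (annihilationCLM E f)
  have hB := integrable_norm_sq_schwartz (creationCLM E f)
  have hD : Integrable fun x => ‖deriv f x‖ ^ 2 := by
    simpa using integrable_norm_sq_schwartz (SchwartzMap.derivCLM ℂ ℂ f)
  rw [← integral_add hA hB, ← integral_div]
  refine integral_mono hD ((hA.add hB).div_const 2) fun x => ?_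
  have h := parallelogram_law_with_norm ℝ (E * (x * f x)) (deriv f x)
  simp only [annihilationCLM_apply, creationCLM_apply]
  nlinarith [sq_nonneg ‖(E : ℂ) * (x * f x)‖]

end SupBound

section MomentProblem

variable {F : Type*} [NormedAddCommGroup F] [NormedSpace ℂ F]

lemma fourier_eq_zero_of_forall_moment_eq_zero {f : ℝ → F} (hf : AEStronglyMeasurable f volume)
    (hexp : ∀ t : ℝ, Integrable fun x => Real.exp (t * |x|) * ‖f x‖)
    (hmom : ∀ n : ℕ, ∫ x : ℝ, (x : ℂ) ^ n • f x = 0) (w : ℝ) :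
    FourierTransform.fourier f w = 0 := by
  set c : ℂ := ((-2 * Real.pi * w : ℝ) : ℂ) * I
  have hterm (n : ℕ) : ∫ x : ℝ, ((c * x) ^ n / (n.factorial : ℂ)) • f x = 0 := by
    simp_rw [mul_pow, mul_div_right_comm, mul_smul, integral_smul, hmom, smul_zero]
  have htsum (y : ℝ) : ∑' n : ℕ, y ^ n / (n.factorial : ℝ) = Real.exp y := by
    rw [Real.exp_eq_exp_ℝ, NormedSpace.exp_eq_tsum_div]
  have hsum := hasSum_integral_of_dominated_convergence (μ := volume)
    (F := fun (n : ℕ) (x : ℝ) => ((c * x) ^ n / (n.factorial : ℂ)) • f x)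
    (f := fun x : ℝ => exp (c * x) • f x)
    (fun n x => (‖c‖ * |x|) ^ n / n.factorial * ‖f x‖)
    (fun n => AEStronglyMeasurable.smul (by fun_prop) hf)
    (fun n => .of_forall fun x => by simp [norm_smul])
    (.of_forall fun x => (Real.summable_pow_div_factorial _).mul_right _)
    (by simpa only [tsum_mul_right, htsum] using hexp ‖c‖)
    (.of_forall fun x => by
      rw [exp_eq_exp_ℂ]
      exact (NormedSpace.expSeries_div_hasSum_exp (c * x)).smul_const (f x))
  simp only [hterm] at hsum
  rw [Real.fourier_real_eq_integral_exp_smul, ← hsum.unique hasSum_zero]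
  congr with x
  simp only [c]
  push_cast
  ring_nf

lemma eq_zero_of_forall_moment_eq_zero [CompleteSpace F] {f : ℝ → F} (hf : Continuous f)
    (hexp : ∀ t : ℝ, Integrable fun x => Real.exp (t * |x|) * ‖f x‖)
    (hmom : ∀ n : ℕ, ∫ x : ℝ, (x : ℂ) ^ n • f x = 0) : f = 0 := by
  have hfourier : FourierTransform.fourier f = 0 :=
    funext (fourier_eq_zero_of_forall_moment_eq_zero hf.aestronglyMeasurable hexp hmom)
  have hint : Integrable f :=
    (integrable_norm_iff hf.aestronglyMeasurable).1 (by simpa using hexp 0)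
  rw [← hf.fourierInv_fourier_eq hint (by rw [hfourier]; exact integrable_zero _ _ _), hfourier]
  ext w
  simp [Real.fourierInv_eq]

lemma integrable_exp_mul_abs_mul_exp_neg_mul_sq (t : ℝ) {b : ℝ} (hb : 0 < b) :
    Integrable fun x : ℝ => Real.exp (t * |x|) * Real.exp (-b * x ^ 2) := by
  refine ((integrable_exp_neg_mul_sq (half_pos hb)).const_mul
    (Real.exp (t ^ 2 / (2 * b)))).mono' (by fun_prop) (.of_forall fun x => ?_)
  have hsq : t ^ 2 / (2 * b) + -(b / 2) * x ^ 2 - (t * |x| + -b * x ^ 2) =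
      (t - b * |x|) ^ 2 / (2 * b) := by
    rw [← sq_abs x]
    field_simp
    ring
  rw [← Real.exp_add, ← Real.exp_add, Real.norm_of_nonneg (Real.exp_nonneg _), Real.exp_le_exp,
    ← sub_nonneg, hsq]
  positivity

end MomentProblem

/-- `Ψ n` is the Hermite function `hermiteFn E n`, realized as a complex Schwartz function. -/
structure IsHermiteSequence (E : ℝ) (Ψ : ℕ → 𝓢(ℝ, ℂ)) : Prop where
  pos : 0 < E
  apply_eq : ∀ n q, Ψ n q = (hermiteFn E n q : ℂ)

namespace IsHermiteSequence

variable {E : ℝ} {Ψ : ℕ → 𝓢(ℝ, ℂ)} (H : IsHermiteSequence E Ψ)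
include H

lemma deriv_apply (n : ℕ) (q : ℝ) :
    deriv (Ψ n) q = E * q * Ψ n q - ladderCoeff E n * Ψ (n + 1) q := by
  simp only [H.apply_eq, funext (H.apply_eq n)]
  exact_mod_cast (hasDerivAt_hermiteFn H.pos.le n q).ofReal_comp.deriv

lemma creationCLM_eq (n : ℕ) : creationCLM E (Ψ n) = (ladderCoeff E n : ℂ) • Ψ (n + 1) := by
  ext q
  rw [creationCLM_apply, H.deriv_apply, smul_apply, smul_eq_mul]
  ring

lemma annihilationCLM_zero : annihilationCLM E (Ψ 0) = 0 := by
  ext q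
  have h : (ladderCoeff E 0 : ℂ) * Ψ 1 q = 2 * E * q * Ψ 0 q := by
    simp only [H.apply_eq]
    exact_mod_cast ladderCoeff_mul_hermiteFn_one H.pos.le q
  rw [annihilationCLM_apply, H.deriv_apply, zero_apply]
  linear_combination -h

lemma annihilationCLM_succ (n : ℕ) :
    annihilationCLM E (Ψ (n + 1)) = (ladderCoeff E n : ℂ) • Ψ n := by
  ext q
  have h : (ladderCoeff E (n + 1) : ℂ) * Ψ (n + 2) q =
      2 * E * q * Ψ (n + 1) q - ladderCoeff E n * Ψ n q := by
    simp only [H.apply_eq]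
    exact_mod_cast ladderCoeff_mul_hermiteFn_add_two H.pos.le n q
  rw [annihilationCLM_apply, H.deriv_apply, smul_apply, smul_eq_mul]
  linear_combination -h

lemma integralPairing_annihilationCLM_apply (n : ℕ) (φ : 𝓢(ℝ, ℂ)) :
    integralPairing (Ψ n) (annihilationCLM E φ) =
      ladderCoeff E n * integralPairing (Ψ (n + 1)) φ := by
  rw [integralPairing_annihilationCLM, H.creationCLM_eq, integralPairing_smul_left]

lemma integralPairing_zero_creationCLM_apply (φ : 𝓢(ℝ, ℂ)) :
    integralPairing (Ψ 0) (creationCLM E φ) = 0 := by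
  rw [integralPairing_creationCLM, H.annihilationCLM_zero, integralPairing_comm, map_zero]

lemma integralPairing_succ_creationCLM_apply (n : ℕ) (φ : 𝓢(ℝ, ℂ)) :
    integralPairing (Ψ (n + 1)) (creationCLM E φ) = ladderCoeff E n * integralPairing (Ψ n) φ := by
  rw [integralPairing_creationCLM, H.annihilationCLM_succ, integralPairing_smul_left]

lemma integralPairing_annihilationCLM_creationCLM (n : ℕ) (φ : 𝓢(ℝ, ℂ)) :
    integralPairing (Ψ n) (annihilationCLM E (creationCLM E φ)) =
      (2 * E * (n + 1) : ℝ) * integralPairing (Ψ n) φ := by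
  rw [H.integralPairing_annihilationCLM_apply, H.integralPairing_succ_creationCLM_apply,
    ← mul_assoc, ← ofReal_mul, ladderCoeff_mul_self H.pos.le]

lemma annihilationCLM_rankOneCLM_succ (n : ℕ) (φ : 𝓢(ℝ, ℂ)) :
    annihilationCLM E (rankOneCLM (Ψ (n + 1)) φ) = rankOneCLM (Ψ n) (annihilationCLM E φ) := by
  rw [rankOneCLM_apply, rankOneCLM_apply, map_smul, H.annihilationCLM_succ, smul_smul,
    H.integralPairing_annihilationCLM_apply, mul_comm]

lemma creationCLM_rankOneCLM (n : ℕ) (φ : 𝓢(ℝ, ℂ)) :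
    creationCLM E (rankOneCLM (Ψ n) φ) = rankOneCLM (Ψ (n + 1)) (creationCLM E φ) := by
  rw [rankOneCLM_apply, rankOneCLM_apply, map_smul, H.creationCLM_eq, smul_smul,
    H.integralPairing_succ_creationCLM_apply, mul_comm]

lemma integralPairing_zero_zero : integralPairing (Ψ 0) (Ψ 0) = 1 := by
  simp only [integralPairing_apply, H.apply_eq, ← ofReal_mul]
  rw [integral_complex_ofReal, integral_hermiteFn_zero_mul_self H.pos, ofReal_one]

lemma integralPairing_eq_ite (m n : ℕ) :
    integralPairing (Ψ m) (Ψ n) = if m = n then 1 else 0 := by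
  have hne (k : ℕ) : (ladderCoeff E k : ℂ) ≠ 0 := mod_cast ladderCoeff_ne_zero H.pos k
  induction m generalizing n with
  | zero =>
    cases n with
    | zero => simp [H.integralPairing_zero_zero]
    | succ n =>
      have h := H.integralPairing_zero_creationCLM_apply (Ψ n)
      rw [H.creationCLM_eq, map_smul, smul_eq_mul] at h
      simpa [hne n] using h
  | succ m ih =>
    have h := H.integralPairing_annihilationCLM_apply m (Ψ n)
    cases n with
    | zero =>
      rw [H.annihilationCLM_zero, map_zero, eq_comm] at h
      simpa [hne m] using h
    | succ n =>
      rw [H.annihilationCLM_succ, map_smul, smul_eq_mul, ih] at h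
      rcases eq_or_ne m n with rfl | hmn
      · simpa [hne m] using h.symm
      · simpa [hne m, hmn] using h.symm

lemma integral_norm_sq_eq_one (n : ℕ) : ∫ x, ‖Ψ n x‖ ^ 2 = 1 := by
  have hsq (x : ℝ) : Ψ n x * Ψ n x = ((‖Ψ n x‖ ^ 2 : ℝ) : ℂ) := by
    rw [H.apply_eq, norm_real, Real.norm_eq_abs, sq_abs, sq, ofReal_mul]
  have h := H.integralPairing_eq_ite n n
  simp only [integralPairing_apply, hsq, if_true] at h
  rw [integral_complex_ofReal] at h
  exact_mod_cast h

lemma integral_norm_creationCLM_sq (n : ℕ) :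
    ∫ x, ‖creationCLM E (Ψ n) x‖ ^ 2 = 2 * E * (n + 1) := by
  simp only [H.creationCLM_eq, smul_apply, norm_smul, norm_real, Real.norm_eq_abs, mul_pow,
    sq_abs, integral_const_mul, H.integral_norm_sq_eq_one]
  rw [mul_one, sq, ladderCoeff_mul_self H.pos.le]

lemma integral_norm_annihilationCLM_sq (n : ℕ) :
    ∫ x, ‖annihilationCLM E (Ψ n) x‖ ^ 2 = 2 * E * n := by
  cases n with
  | zero => simp [H.annihilationCLM_zero]
  | succ n =>
    simp only [H.annihilationCLM_succ, smul_apply, norm_smul, norm_real, Real.norm_eq_abs, mul_pow,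
      sq_abs, integral_const_mul, H.integral_norm_sq_eq_one]
    rw [mul_one, sq, ladderCoeff_mul_self H.pos.le, Nat.cast_succ]

lemma norm_apply_le (n : ℕ) (x : ℝ) : ‖Ψ n x‖ ≤ (1 + E) * (n + 1) := by
  have hE := H.pos
  have hsq : ‖Ψ n x‖ ^ 2 ≤ 1 + E * (2 * n + 1) := by
    calc ‖Ψ n x‖ ^ 2 ≤ (∫ y, ‖Ψ n y‖ ^ 2) + ∫ y, ‖deriv (Ψ n) y‖ ^ 2 :=
          norm_sq_le_integral_norm_sq_add_integral_norm_deriv_sq (Ψ n) x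
      _ ≤ 1 + (2 * E * n + 2 * E * (n + 1)) / 2 := by
          rw [← H.integral_norm_annihilationCLM_sq, ← H.integral_norm_creationCLM_sq,
            H.integral_norm_sq_eq_one]
          gcongr
          exact integral_norm_deriv_sq_le E (Ψ n)
      _ = 1 + E * (2 * n + 1) := by ring
  nlinarith [sq_nonneg (‖Ψ n x‖ - 1), (Nat.cast_nonneg n : (0 : ℝ) ≤ n)]

lemma integralPairing_iterate_annihilationCLM_creationCLM (k n : ℕ) (φ : 𝓢(ℝ, ℂ)) :
    integralPairing (Ψ n) ((fun f => annihilationCLM E (creationCLM E f))^[k] φ) =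
      ((2 * E * (n + 1)) ^ k : ℝ) * integralPairing (Ψ n) φ := by
  induction k with
  | zero => simp
  | succ k ih =>
    rw [Function.iterate_succ_apply', H.integralPairing_annihilationCLM_creationCLM, ih,
      ← mul_assoc, ← ofReal_mul, pow_succ']

lemma exists_norm_integralPairing_le (k : ℕ) (φ : 𝓢(ℝ, ℂ)) :
    ∃ C, ∀ n : ℕ, ‖integralPairing (Ψ n) φ‖ ≤ C / (n + 1) ^ k := by
  have hE := H.pos
  set φk := (fun f => annihilationCLM E (creationCLM E f))^[k] φ with hφk
  refine ⟨(1 + ∫ x, ‖φk x‖ ^ 2) / (2 * E) ^ k, fun n => ?_⟩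
  have h := norm_integralPairing_le (Ψ n) φk
  rw [H.integral_norm_sq_eq_one, hφk, H.integralPairing_iterate_annihilationCLM_creationCLM,
    norm_mul, norm_real, Real.norm_of_nonneg (by positivity)] at h
  rw [div_div, ← mul_pow, le_div_iff₀' (by positivity)]
  exact h

lemma summable_schwartzSeminorm_zero_zero (φ : 𝓢(ℝ, ℂ)) :
    Summable fun n => SchwartzMap.seminorm ℂ 0 0 (rankOneCLM (Ψ n) φ) := by
  obtain ⟨C, hC⟩ := H.exists_norm_integralPairing_le 3 φ
  have hE := H.pos
  have hsummable : Summable fun n : ℕ => C * (1 + E) * (1 / ((n : ℝ) + 1) ^ 2) := by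
    have h := (summable_nat_add_iff 1).2 (Real.summable_one_div_nat_pow.2 one_lt_two)
    exact Summable.mul_left _ (by exact_mod_cast h)
  refine hsummable.of_nonneg_of_le (fun n => apply_nonneg _ _) fun n => ?_
  have hsup : SchwartzMap.seminorm ℂ 0 0 (Ψ n) ≤ (1 + E) * (n + 1) :=
    SchwartzMap.seminorm_le_bound ℂ 0 0 _ (by positivity) fun x => by
      simpa using H.norm_apply_le n x
  calc SchwartzMap.seminorm ℂ 0 0 (rankOneCLM (Ψ n) φ)
      = ‖integralPairing (Ψ n) φ‖ * SchwartzMap.seminorm ℂ 0 0 (Ψ n) := by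
        rw [rankOneCLM_apply, map_smul_eq_mul]
    _ ≤ C / (n + 1) ^ 3 * ((1 + E) * (n + 1)) :=
        mul_le_mul (hC n) hsup (apply_nonneg _ _) ((norm_nonneg _).trans (hC n))
    _ = C * (1 + E) * (1 / ((n : ℝ) + 1) ^ 2) := by
        field_simp

section SeminormInduction

variable {p : Seminorm ℂ 𝓢(ℝ, ℂ)} (hp : ∀ φ, Summable fun n => p (rankOneCLM (Ψ n) φ))
include hp

lemma summable_seminorm_annihilationCLM (φ : 𝓢(ℝ, ℂ)) :
    Summable fun n => p (annihilationCLM E (rankOneCLM (Ψ n) φ)) := by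
  rw [← summable_nat_add_iff 1]
  simpa only [H.annihilationCLM_rankOneCLM_succ] using hp (annihilationCLM E φ)

lemma summable_seminorm_creationCLM (φ : 𝓢(ℝ, ℂ)) :
    Summable fun n => p (creationCLM E (rankOneCLM (Ψ n) φ)) := by
  simpa only [H.creationCLM_rankOneCLM] using (summable_nat_add_iff 1).2 (hp (creationCLM E φ))

lemma summable_seminorm_positionCLM (φ : 𝓢(ℝ, ℂ)) :
    Summable fun n => p (positionCLM (rankOneCLM (Ψ n) φ)) := by
  refine (((H.summable_seminorm_annihilationCLM hp φ).add
    (H.summable_seminorm_creationCLM hp φ)).mul_left ‖((2 * E : ℝ) : ℂ)⁻¹‖).of_nonneg_of_le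
      (fun n => apply_nonneg _ _) fun n => ?_
  rw [positionCLM_eq_smul_annihilationCLM_add_creationCLM H.pos.ne', map_smul_eq_mul]
  gcongr
  exact map_add_le_add p _ _

lemma summable_seminorm_derivCLM (φ : 𝓢(ℝ, ℂ)) :
    Summable fun n => p (SchwartzMap.derivCLM ℂ ℂ (rankOneCLM (Ψ n) φ)) := by
  refine (((H.summable_seminorm_annihilationCLM hp φ).add
    (H.summable_seminorm_creationCLM hp φ)).mul_left ‖(2⁻¹ : ℂ)‖).of_nonneg_of_le
      (fun n => apply_nonneg _ _) fun n => ?_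
  rw [derivCLM_eq_smul_annihilationCLM_sub_creationCLM E, map_smul_eq_mul]
  gcongr
  exact map_sub_le_add p _ _

end SeminormInduction

lemma summable_schwartzSeminorm (k m : ℕ) (φ : 𝓢(ℝ, ℂ)) :
    Summable fun n => SchwartzMap.seminorm ℂ k m (rankOneCLM (Ψ n) φ) := by
  induction m generalizing φ with
  | zero =>
    induction k generalizing φ with
    | zero => exact H.summable_schwartzSeminorm_zero_zero φ
    | succ k ih =>
      exact (H.summable_seminorm_positionCLM ih φ).of_nonneg_of_le (fun n => apply_nonneg _ _)
        fun n => schwartzSeminorm_succ_zero_le k _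
  | succ m ih =>
    exact (H.summable_seminorm_derivCLM ih φ).of_nonneg_of_le (fun n => apply_nonneg _ _)
      fun n => schwartzSeminorm_succ_right_le k m _

lemma summable_rankOneCLM (φ : 𝓢(ℝ, ℂ)) : Summable fun n => rankOneCLM (Ψ n) φ :=
  summable_of_summable_schwartzSeminorm fun k m => H.summable_schwartzSeminorm k m φ

lemma integralPairing_positionCLM_eq_zero {h : 𝓢(ℝ, ℂ)} (hh : ∀ n, integralPairing (Ψ n) h = 0)
    (n : ℕ) : integralPairing (Ψ n) (positionCLM h) = 0 := by
  have hA : integralPairing (Ψ n) (annihilationCLM E h) = 0 := by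
    rw [H.integralPairing_annihilationCLM_apply, hh, mul_zero]
  have hB : integralPairing (Ψ n) (creationCLM E h) = 0 := by
    cases n with
    | zero => exact H.integralPairing_zero_creationCLM_apply h
    | succ n => rw [H.integralPairing_succ_creationCLM_apply, hh, mul_zero]
  rw [positionCLM_eq_smul_annihilationCLM_add_creationCLM H.pos.ne', map_smul, map_add, hA, hB,
    add_zero, smul_zero]

lemma integral_pow_smul_mul_eq_zero {h : 𝓢(ℝ, ℂ)} (hh : ∀ n, integralPairing (Ψ n) h = 0)
    (k : ℕ) : ∫ x : ℝ, (x : ℂ) ^ k • (Ψ 0 x * h x) = 0 := by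
  have hiter (n : ℕ) : integralPairing (Ψ n) (positionCLM^[k] h) = 0 := by
    induction k generalizing h with
    | zero => exact hh n
    | succ _ ih => exact ih (H.integralPairing_positionCLM_eq_zero hh)
  simpa only [integralPairing_apply, positionCLM_iterate_apply, smul_eq_mul,
    mul_left_comm] using hiter 0

lemma integrable_exp_mul_abs_mul_norm_zero_mul (h : 𝓢(ℝ, ℂ)) (t : ℝ) :
    Integrable fun x => Real.exp (t * |x|) * ‖Ψ 0 x * h x‖ := by
  have hgauss := (integrable_exp_mul_abs_mul_exp_neg_mul_sq t (half_pos H.pos)).const_mul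
    ((E / Real.pi) ^ ((1 : ℝ) / 4) * SchwartzMap.seminorm ℂ 0 0 h)
  have hE := H.pos
  refine hgauss.mono' (by fun_prop) (.of_forall fun x => ?_)
  calc ‖Real.exp (t * |x|) * ‖Ψ 0 x * h x‖‖
      = Real.exp (t * |x|) * (hermiteFn E 0 x * ‖h x‖) := by
        rw [norm_mul, norm_norm, Real.norm_of_nonneg (Real.exp_nonneg _), norm_mul, H.apply_eq,
          norm_real, hermiteFn_zero, Real.norm_of_nonneg (by positivity)]
    _ ≤ Real.exp (t * |x|) * (hermiteFn E 0 x * SchwartzMap.seminorm ℂ 0 0 h) := by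
        rw [hermiteFn_zero]
        gcongr
        exact h.norm_le_seminorm ℂ x
    _ = (E / Real.pi) ^ ((1 : ℝ) / 4) * SchwartzMap.seminorm ℂ 0 0 h *
          (Real.exp (t * |x|) * Real.exp (-(E / 2) * x ^ 2)) := by
        rw [hermiteFn_zero]
        ring_nf

lemma zero_apply_ne_zero (x : ℝ) : Ψ 0 x ≠ 0 := by
  have hE := H.pos
  rw [H.apply_eq, hermiteFn_zero, ofReal_ne_zero]
  positivity

lemma eq_zero_of_forall_integralPairing_eq_zero {h : 𝓢(ℝ, ℂ)}
    (hh : ∀ n, integralPairing (Ψ n) h = 0) : h = 0 := by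
  have hzero : (fun x => Ψ 0 x * h x) = 0 :=
    eq_zero_of_forall_moment_eq_zero (by fun_prop) (H.integrable_exp_mul_abs_mul_norm_zero_mul h)
      (H.integral_pow_smul_mul_eq_zero hh)
  ext x
  simpa [H.zero_apply_ne_zero x] using congrFun hzero x

lemma hasSum_rankOneCLM (φ : 𝓢(ℝ, ℂ)) : HasSum (fun n => rankOneCLM (Ψ n) φ) φ := by
  have hsum := (H.summable_rankOneCLM φ).hasSum
  have hcoeff (m : ℕ) : integralPairing (Ψ m) (∑' n, rankOneCLM (Ψ n) φ) =
      integralPairing (Ψ m) φ := by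
    have hterm (n : ℕ) : integralPairing (Ψ m) (rankOneCLM (Ψ n) φ) =
        if n = m then integralPairing (Ψ m) φ else 0 := by
      rcases eq_or_ne n m with rfl | hnm
      · simp [rankOneCLM_apply, H.integralPairing_eq_ite]
      · simp [rankOneCLM_apply, H.integralPairing_eq_ite, hnm, hnm.symm]
    refine (hsum.mapL (integralPairing (Ψ m))).unique ?_
    simpa only [hterm] using hasSum_ite_eq m (integralPairing (Ψ m) φ)
  have hdiff : (∑' n, rankOneCLM (Ψ n) φ) - φ = 0 :=
    H.eq_zero_of_forall_integralPairing_eq_zero fun m => by rw [map_sub, hcoeff, sub_self]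
  rwa [sub_eq_zero.1 hdiff] at hsum

end IsHermiteSequence

/-- Parseval-type expansion for tempered distributions: for every
continuous linear functional `F` on Schwartz space and every Schwartz `φ`,
the series `Σ_n F(ψ_n)·(∫ ψ_n φ)` converges to `F(φ)`.  (Here `Ψ n` is the
Hermite function `ψ_n` realized as a Schwartz map.) -/
theorem tempered_distribution_hermite_expansion (E' : ℝ) (hE' : 0 < E')
    (F : SchwartzMap ℝ ℂ →L[ℂ] ℂ)
    (Ψ : ℕ → SchwartzMap ℝ ℂ)
    (hΨ : ∀ (n : ℕ) (q : ℝ), Ψ n q = ((hermiteFn E' n q : ℝ) : ℂ))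
    (φ : SchwartzMap ℝ ℂ) :
    Filter.Tendsto
      (fun N : ℕ => ∑ n ∈ Finset.range N,
        F (Ψ n) * ∫ q : ℝ, ((hermiteFn E' n q : ℝ) : ℂ) * φ q)
      Filter.atTop (nhds (F φ)) := by
  have H : IsHermiteSequence E' Ψ := ⟨hE', hΨ⟩
  have hsum : HasSum (fun n => F (rankOneCLM (Ψ n) φ)) (F φ) := (H.hasSum_rankOneCLM φ).mapL F
  refine hsum.tendsto_sum_nat.congr fun N => Finset.sum_congr rfl fun n _ => ?_
  simp only [rankOneCLM_apply, map_smul, smul_eq_mul, integralPairing_apply, hΨ, mul_comm]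
end

section
/- Let α ≥ ½, θ > 0, and let ψ, φ ∈ S^α_α(ℝ). Then the Wigner distribution W(t,x) := (1/2π) ∫_ℝ e^{ikx} ψ(t − θk/2) conj(φ(t + θk/2)) dk is given by an absolutely convergent integral for every (t,x) ∈ ℝ², and W belongs to the Gel'fand–Shilov space S^α_α(ℝ²). -/
open MeasureTheory Filter Complex

/-- Membership in the Gel'fand–Shilov space `S^α_α(ℝ)`. -/
def GelfandShilov (α : ℝ) (φ : ℝ → ℂ) : Prop :=
  ContDiff ℝ (⊤ : ℕ∞) φ ∧ ∃ C > (0 : ℝ), ∃ M > (0 : ℝ), ∀ n m : ℕ, ∀ x : ℝ,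
    ‖((x : ℂ)) ^ m * iteratedDeriv n φ x‖
      ≤ C * M ^ (n + m) * (n : ℝ) ^ (α * (n : ℝ)) * (m : ℝ) ^ (α * (m : ℝ))

/-- Partial-derivative operator in the first variable. -/
noncomputable def ptOp (f : ℝ × ℝ → ℂ) : ℝ × ℝ → ℂ :=
  fun p => deriv (fun a => f (a, p.2)) p.1

/-- Partial-derivative operator in the second variable. -/
noncomputable def pxOp (f : ℝ × ℝ → ℂ) : ℝ × ℝ → ℂ :=
  fun p => deriv (fun b => f (p.1, b)) p.2

/-- Membership in the Gel'fand–Shilov space `S^α_α(ℝ²)`. -/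
def GelfandShilov2 (α : ℝ) (f : ℝ × ℝ → ℂ) : Prop :=
  ContDiff ℝ (⊤ : ℕ∞) f ∧ ∃ C > (0 : ℝ), ∃ M > (0 : ℝ), ∀ n₁ n₂ m₁ m₂ : ℕ, ∀ p : ℝ × ℝ,
    ‖((p.1 : ℂ)) ^ m₁ * ((p.2 : ℂ)) ^ m₂ * (ptOp^[n₁] (pxOp^[n₂] f)) p‖
      ≤ C * M ^ (n₁ + n₂ + m₁ + m₂) * (n₁ : ℝ) ^ (α * (n₁ : ℝ)) *
          (n₂ : ℝ) ^ (α * (n₂ : ℝ)) * (m₁ : ℝ) ^ (α * (m₁ : ℝ)) *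
          (m₂ : ℝ) ^ (α * (m₂ : ℝ))

/-!
The Wigner distribution is the transform `W F (t, x) = ∫ e^{ikx} F(t + ak, t + bk) dk` of
`F(u, v) = ψ(u) conj(φ(v)) / 2π` with slopes `a = -θ/2`, `b = θ/2`. Each of `t ·`, `x ·`, `∂_t` and
`∂_x` acts on `W F` as a single first-order operator acts on `F`: multiplication by a linear
functional or a directional derivative. If `‖y‖ᵐ ‖DⁿF(y)‖ ≤ A B(n + m)`, such an operator replaces
`B(n + m)` by `B(n + m + 1)` and multiplies `A` by a fixed constant. Indeed the commutator term
`n B(n + m - 1)` produced by a multiplication is at most `B(n + m + 1)`, because over two steps the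
weight `B(j) = Mʲ j^{αj}` grows by a factor of order `j^{2α} ≥ j`. Hence `N` operators applied to
`W F` give some `W G` with `‖y‖ᵐ ‖DⁿG(y)‖ ≤ Kᴺ A B(n + m + N)`, and the cases `n = 0`, `m = 0, 2` of
this estimate bound `W G`.
-/

section Weights

/-- The weight `n^{αn}` in the definition of the Gel'fand–Shilov spaces. -/
noncomputable def powWeight (α : ℝ) (n : ℕ) : ℝ := (n : ℝ) ^ (α * (n : ℝ))

variable {α : ℝ}

lemma powWeight_eq_rpow (α : ℝ) (n : ℕ) : powWeight α n = ((n : ℝ) ^ n) ^ α := by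
  rw [powWeight, mul_comm, Real.rpow_mul n.cast_nonneg, Real.rpow_natCast]

lemma powWeight_pos (α : ℝ) (n : ℕ) : 0 < powWeight α n := by
  rw [powWeight_eq_rpow]
  exact Real.rpow_pos_of_pos (mod_cast Nat.pow_self_pos) _

lemma powWeight_mul_le_add (hα : 0 ≤ α) (i j : ℕ) :
    powWeight α i * powWeight α j ≤ powWeight α (i + j) := by
  simp only [powWeight_eq_rpow]
  rw [← Real.mul_rpow (by positivity) (by positivity)]
  refine Real.rpow_le_rpow (by positivity) ?_ hα
  rw [pow_add]
  gcongr <;> simp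

lemma add_pow_self_le (i j : ℕ) :
    ((i + j : ℕ) : ℝ) ^ (i + j) ≤ (2 * Real.exp 1) ^ (i + j) * ((i : ℝ) ^ i * (j : ℝ) ^ j) := by
  have h_exp : ((i + j : ℕ) : ℝ) ^ (i + j) ≤ Real.exp 1 ^ (i + j) * (i + j).factorial := by
    rw [← Real.exp_nat_mul, mul_one, ← div_le_iff₀ (by positivity)]
    exact Real.pow_div_factorial_le_exp _ (Nat.cast_nonneg _) _
  have h_choose : (i + j).factorial ≤ 2 ^ (i + j) * (i ^ i * j ^ j) := by
    rw [← Nat.add_choose_mul_factorial_mul_factorial, mul_assoc]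
    gcongr <;> first | exact Nat.choose_le_two_pow _ _ | exact Nat.factorial_le_pow _
  calc ((i + j : ℕ) : ℝ) ^ (i + j)
      ≤ Real.exp 1 ^ (i + j) * (2 ^ (i + j) * ((i : ℝ) ^ i * (j : ℝ) ^ j)) :=
        h_exp.trans (by gcongr; exact_mod_cast h_choose)
    _ = (2 * Real.exp 1) ^ (i + j) * ((i : ℝ) ^ i * (j : ℝ) ^ j) := by rw [mul_pow]; ring

lemma powWeight_add_le (hα : 0 ≤ α) (i j : ℕ) :
    powWeight α (i + j)
      ≤ ((2 * Real.exp 1) ^ α) ^ (i + j) * (powWeight α i * powWeight α j) := by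
  simp only [powWeight_eq_rpow]
  rw [Real.rpow_pow_comm (by positivity), ← Real.mul_rpow (by positivity) (by positivity),
    ← Real.mul_rpow (by positivity) (by positivity)]
  exact Real.rpow_le_rpow (by positivity) (add_pow_self_le i j) hα

lemma succ_mul_powWeight_le (hα : 1 / 2 ≤ α) (n : ℕ) :
    (n + 1) * powWeight α n ≤ powWeight α (n + 2) := by
  have : 0 ≤ α := by linarith
  have h_sq : (n : ℝ) + 1 ≤ (((n + 2 : ℕ) : ℝ) ^ 2) ^ α :=
    calc (n : ℝ) + 1 ≤ ((n + 2 : ℕ) : ℝ) ^ (1 : ℝ) := by push_cast; rw [Real.rpow_one]; linarith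
      _ ≤ ((n + 2 : ℕ) : ℝ) ^ (2 * α) :=
        Real.rpow_le_rpow_of_exponent_le (by push_cast; linarith) (by linarith)
      _ = (((n + 2 : ℕ) : ℝ) ^ 2) ^ α := by rw [Real.rpow_mul (by positivity), Real.rpow_two]
  calc (n + 1) * powWeight α n
      ≤ (((n + 2 : ℕ) : ℝ) ^ 2) ^ α * (((n + 2 : ℕ) : ℝ) ^ n) ^ α := by
        rw [powWeight_eq_rpow]
        gcongr
        simp
    _ = powWeight α (n + 2) := by
        rw [powWeight_eq_rpow, ← Real.mul_rpow (by positivity) (by positivity), ← pow_add,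
          add_comm 2]

/-- The weight `Mⁿ n^{αn}`: a derivative of order `n` times a monomial of degree `m` of a function
in the Gel'fand–Shilov space of index `α` is `O(gsWeight α M (n + m))` for some `M`. -/
noncomputable def gsWeight (α M : ℝ) (n : ℕ) : ℝ := M ^ n * powWeight α n

/-- The properties of a weight sequence `B` needed for the class of functions `F` with
`‖x‖ᵐ ‖DⁿF(x)‖ = O(B (n + m))` to be stable under derivatives and coordinate multiplications with
control of the bounds: the second one absorbs the commutator `[∂, x] = 1`, which lowers the total
order by two. -/
structure IsStableWeight (B : ℕ → ℝ) : Prop where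
  nonneg : ∀ n, 0 ≤ B n
  succ_mul_le : ∀ n, (n + 1) * B n ≤ B (n + 2)

variable {M : ℝ}

lemma gsWeight_nonneg (hM : 0 ≤ M) (n : ℕ) : 0 ≤ gsWeight α M n :=
  mul_nonneg (pow_nonneg hM n) (powWeight_pos α n).le

lemma isStableWeight_gsWeight (hα : 1 / 2 ≤ α) (hM : 1 ≤ M) : IsStableWeight (gsWeight α M) where
  nonneg := gsWeight_nonneg (zero_le_one.trans hM)
  succ_mul_le n := by
    have := powWeight_pos α n
    calc (n + 1) * gsWeight α M n = M ^ n * ((n + 1) * powWeight α n) := by unfold gsWeight; ring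
      _ ≤ M ^ (n + 2) * powWeight α (n + 2) := by
        gcongr ?_ * ?_
        · exact pow_le_pow_right₀ hM (Nat.le_add_right n 2)
        · exact succ_mul_powWeight_le hα n

lemma gsWeight_mul_le_add (hα : 0 ≤ α) (hM : 0 ≤ M) (i j : ℕ) :
    gsWeight α M i * gsWeight α M j ≤ gsWeight α M (i + j) :=
  calc gsWeight α M i * gsWeight α M j = M ^ (i + j) * (powWeight α i * powWeight α j) := by
        unfold gsWeight; ring
    _ ≤ gsWeight α M (i + j) := by
        unfold gsWeight
        gcongr
        exact powWeight_mul_le_add hα i j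

lemma two_pow_mul_gsWeight (α M : ℝ) (n : ℕ) : 2 ^ n * gsWeight α M n = gsWeight α (2 * M) n := by
  rw [gsWeight, gsWeight, mul_pow, mul_assoc]

lemma gsWeight_add_two_le (hα : 0 ≤ α) (hM : 0 ≤ M) (n : ℕ) :
    gsWeight α M n + gsWeight α M (n + 2)
      ≤ (1 + (M * (2 * Real.exp 1) ^ α) ^ 2 * powWeight α 2)
        * gsWeight α (M * (2 * Real.exp 1) ^ α) n := by
  set E := (2 * Real.exp 1) ^ α
  have hE : 1 ≤ E := Real.one_le_rpow (by linarith [Real.add_one_le_exp 1]) hα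
  have := powWeight_pos α n
  calc gsWeight α M n + gsWeight α M (n + 2)
      ≤ (M * E) ^ n * powWeight α n
        + M ^ (n + 2) * (E ^ (n + 2) * (powWeight α n * powWeight α 2)) := by
        unfold gsWeight
        gcongr
        · exact le_mul_of_one_le_right hM hE
        · exact powWeight_add_le hα n 2
    _ = (1 + (M * E) ^ 2 * powWeight α 2) * gsWeight α (M * E) n := by
        unfold gsWeight; ring

lemma gsWeight_add_four_le (hα : 0 ≤ α) (hM : 0 ≤ M) (i j k l : ℕ) :
    gsWeight α M (i + j + k + l) ≤ (M * ((2 * Real.exp 1) ^ α) ^ 2) ^ (i + j + k + l) *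
      powWeight α i * powWeight α j * powWeight α k * powWeight α l := by
  set E := (2 * Real.exp 1) ^ α
  have : 0 ≤ E := by positivity
  have := powWeight_pos α i
  have := powWeight_pos α j
  have := powWeight_pos α k
  have := powWeight_pos α (k + l)
  calc gsWeight α M (i + j + k + l)
      ≤ M ^ (i + j + k + l) * (E ^ (i + j + k + l) *
          ((E ^ (i + j) * (powWeight α i * powWeight α j)) *
            (E ^ (k + l) * (powWeight α k * powWeight α l)))) := by
        unfold gsWeight
        gcongr
        rw [add_assoc (i + j)]
        refine (powWeight_add_le hα _ _).trans ?_
        gcongr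
        · exact powWeight_add_le hα i j
        · exact powWeight_add_le hα k l
    _ = _ := by rw [mul_pow, ← pow_mul, two_mul, pow_add]; ring

lemma exists_gsWeight_add_gsWeight_le (hα : 0 ≤ α) (hM : 0 < M) :
    ∃ D ≥ 0, ∃ L > 0, ∀ i j k l : ℕ,
      gsWeight α M (i + j + k + l) + gsWeight α M (i + j + k + l + 2)
        ≤ D * L ^ (i + j + k + l) * powWeight α i * powWeight α j * powWeight α k
          * powWeight α l := by
  have := powWeight_pos α 2
  refine ⟨1 + (M * (2 * Real.exp 1) ^ α) ^ 2 * powWeight α 2, by positivity,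
    M * (2 * Real.exp 1) ^ α * ((2 * Real.exp 1) ^ α) ^ 2, by positivity, fun i j k l => ?_⟩
  refine (gsWeight_add_two_le hα hM.le _).trans ?_
  refine (mul_le_mul_of_nonneg_left (gsWeight_add_four_le hα (by positivity) i j k l)
    (by positivity)).trans_eq ?_
  ring

end Weights

section WeightedDecay

variable {E E' G : Type*} [NormedAddCommGroup E] [NormedSpace ℝ E] [NormedAddCommGroup E']
  [NormedSpace ℝ E'] [NormedAddCommGroup G] [NormedSpace ℝ G]

/-- `WeightedDecay B k A F` says that the smooth function `F` satisfies
`‖x‖ᵐ ‖DⁿF(x)‖ ≤ A B(n + m + k)` for all `n` and `m`. The shift `k` counts the derivatives and the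
coordinate multiplications by which `F` was obtained from a function with shift `0`. -/
structure WeightedDecay (B : ℕ → ℝ) (k : ℕ) (A : ℝ) (F : E → G) : Prop where
  contDiff : ContDiff ℝ (⊤ : ℕ∞) F
  const_nonneg : 0 ≤ A
  pow_mul_le : ∀ n m x, ‖x‖ ^ m * ‖iteratedFDeriv ℝ n F x‖ ≤ A * B (n + m + k)

lemma norm_iteratedFDeriv_clm_le (ℓ : E →L[ℝ] G) (n : ℕ) (x : E) :
    ‖iteratedFDeriv ℝ (n + 1) ℓ x‖ ≤ if n = 0 then ‖ℓ‖ else 0 := by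
  have h_fderiv : fderiv ℝ ℓ = fun _ => ℓ := funext fun _ => ℓ.fderiv
  rw [← norm_iteratedFDeriv_fderiv, h_fderiv]
  split_ifs with hn
  · rw [hn, norm_iteratedFDeriv_zero]
  · rw [iteratedFDeriv_const_of_ne hn, Pi.zero_apply, norm_zero]

lemma norm_iteratedFDeriv_clm_smul_le (ℓ : E →L[ℝ] ℝ) {F : E → G} {n : ℕ}
    (hF : ContDiff ℝ n F) (x : E) :
    ‖iteratedFDeriv ℝ n (fun y => ℓ y • F y) x‖
      ≤ ‖ℓ‖ * (‖x‖ * ‖iteratedFDeriv ℝ n F x‖ + n * ‖iteratedFDeriv ℝ (n - 1) F x‖) := by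
  refine (norm_iteratedFDeriv_smul_le ℓ.contDiff hF x le_rfl).trans ?_
  rw [Finset.sum_range_succ', add_comm, mul_add]
  have h_zero : ‖iteratedFDeriv ℝ 0 ℓ x‖ ≤ ‖ℓ‖ * ‖x‖ := by
    simpa only [norm_iteratedFDeriv_zero] using ℓ.le_opNorm x
  have h_succ (i : ℕ) : (n.choose (i + 1) : ℝ) * ‖iteratedFDeriv ℝ (i + 1) ℓ x‖ *
      ‖iteratedFDeriv ℝ (n - (i + 1)) F x‖
        ≤ if i = 0 then ‖ℓ‖ * (n * ‖iteratedFDeriv ℝ (n - 1) F x‖) else 0 := by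
    have := norm_iteratedFDeriv_clm_le ℓ i x
    split_ifs at this ⊢ with hi
    · subst hi
      rw [zero_add, Nat.choose_one_right, mul_assoc, mul_left_comm]
      gcongr
    · rw [le_antisymm this (norm_nonneg _), mul_zero, zero_mul]
  gcongr ?_ + ?_
  · rw [Nat.choose_zero_right, Nat.cast_one, one_mul, ← mul_assoc, Nat.sub_zero]
    gcongr
  · refine (Finset.sum_le_sum fun i _ => h_succ i).trans ?_
    rw [Finset.sum_ite_eq' (Finset.range n) 0 fun _ => ‖ℓ‖ * (n * ‖iteratedFDeriv ℝ (n - 1) F x‖)]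
    split_ifs
    exacts [le_rfl, by positivity]

lemma norm_iteratedFDeriv_comp_clm_le {F : E → G} {n : ℕ} (hF : ContDiff ℝ n F) {L : E' →L[ℝ] E}
    (hL : ‖L‖ ≤ 1) (x : E') :
    ‖iteratedFDeriv ℝ n (F ∘ L) x‖ ≤ ‖iteratedFDeriv ℝ n F (L x)‖ := by
  rw [L.iteratedFDeriv_comp_right hF x le_rfl]
  refine (ContinuousMultilinearMap.norm_compContinuousLinearMap_le _ _).trans ?_
  rw [Finset.prod_const]
  exact mul_le_of_le_one_right (norm_nonneg _) (pow_le_one₀ (norm_nonneg L) hL)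

/-- The derivative of `F` in the direction `v`. -/
noncomputable def dirDeriv (v : E) (F : E → G) : E → G := fun x => fderiv ℝ F x v

namespace WeightedDecay

variable {B : ℕ → ℝ} {k k' : ℕ} {A A' : ℝ} {F : E → G}

lemma mono (hF : WeightedDecay B k A F) (hB : ∀ n, 0 ≤ B n) (hA : A ≤ A') :
    WeightedDecay B k A' F where
  contDiff := hF.contDiff
  const_nonneg := hF.const_nonneg.trans hA
  pow_mul_le n m x := (hF.pow_mul_le n m x).trans (mul_le_mul_of_nonneg_right hA (hB _))

lemma const_smul {𝕜 : Type*} [NormedField 𝕜] [NormedSpace 𝕜 G] [SMulCommClass ℝ 𝕜 G] (c : 𝕜)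
    (hF : WeightedDecay B k A F) : WeightedDecay B k (‖c‖ * A) (c • F) where
  contDiff := hF.contDiff.const_smul c
  const_nonneg := mul_nonneg (norm_nonneg c) hF.const_nonneg
  pow_mul_le n m x := by
    have hF_at : ContDiffAt ℝ n F x := (hF.contDiff.of_le (mod_cast le_top)).contDiffAt
    rw [iteratedFDeriv_const_smul_apply hF_at, norm_smul, mul_left_comm, mul_assoc]
    exact mul_le_mul_of_nonneg_left (hF.pow_mul_le n m x) (norm_nonneg c)

protected lemma dirDeriv (hF : WeightedDecay B k A F) (v : E) :
    WeightedDecay B (k + 1) (‖v‖ * A) (dirDeriv v F) where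
  contDiff := (hF.contDiff.fderiv_right (mod_cast le_top)).clm_apply contDiff_const
  const_nonneg := mul_nonneg (norm_nonneg v) hF.const_nonneg
  pow_mul_le n m x := by
    have h_fderiv : ContDiff ℝ n (fderiv ℝ F) := hF.contDiff.fderiv_right (mod_cast le_top)
    calc ‖x‖ ^ m * ‖iteratedFDeriv ℝ n (fun y => fderiv ℝ F y v) x‖
        ≤ ‖x‖ ^ m * (‖v‖ * ‖iteratedFDeriv ℝ (n + 1) F x‖) := by
          rw [← norm_iteratedFDeriv_fderiv]
          gcongr
          exact norm_iteratedFDeriv_clm_apply_const h_fderiv.contDiffAt le_rfl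
      _ = ‖v‖ * (‖x‖ ^ m * ‖iteratedFDeriv ℝ (n + 1) F x‖) := by ring
      _ ≤ ‖v‖ * (A * B (n + 1 + m + k)) := by gcongr ‖v‖ * ?_; exact hF.pow_mul_le _ m x
      _ = ‖v‖ * A * B (n + m + (k + 1)) := by rw [mul_assoc]; ring_nf

lemma clm_smul (hF : WeightedDecay B k A F) (hB : IsStableWeight B) (ℓ : E →L[ℝ] ℝ) :
    WeightedDecay B (k + 1) (2 * ‖ℓ‖ * A) (fun x => ℓ x • F x) where
  contDiff := ℓ.contDiff.smul hF.contDiff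
  const_nonneg := by have := hF.const_nonneg; positivity
  pow_mul_le n m x := by
    have h_commutator : n * (‖x‖ ^ m * ‖iteratedFDeriv ℝ (n - 1) F x‖) ≤ A * B (n + m + k + 1) := by
      rcases n with _ | n
      · simpa using mul_nonneg hF.const_nonneg (hB.nonneg _)
      calc ((n + 1 : ℕ) : ℝ) * (‖x‖ ^ m * ‖iteratedFDeriv ℝ n F x‖)
          ≤ ((n + m + k : ℕ) + 1) * (A * B (n + m + k)) := by
            gcongr ?_ * ?_
            · exact_mod_cast (by omega : n + 1 ≤ n + m + k + 1)
            · exact hF.pow_mul_le n m x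
        _ = A * (((n + m + k : ℕ) + 1) * B (n + m + k)) := by ring
        _ ≤ A * B (n + m + k + 2) :=
          mul_le_mul_of_nonneg_left (hB.succ_mul_le _) hF.const_nonneg
        _ = A * B (n + 1 + m + k + 1) := by ring_nf
    calc ‖x‖ ^ m * ‖iteratedFDeriv ℝ n (fun y => ℓ y • F y) x‖
        ≤ ‖x‖ ^ m * (‖ℓ‖ * (‖x‖ * ‖iteratedFDeriv ℝ n F x‖
            + n * ‖iteratedFDeriv ℝ (n - 1) F x‖)) := by
          gcongr
          exact norm_iteratedFDeriv_clm_smul_le ℓ (hF.contDiff.of_le (mod_cast le_top)) x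
      _ = ‖ℓ‖ * (‖x‖ ^ (m + 1) * ‖iteratedFDeriv ℝ n F x‖
            + n * (‖x‖ ^ m * ‖iteratedFDeriv ℝ (n - 1) F x‖)) := by ring
      _ ≤ ‖ℓ‖ * (A * B (n + (m + 1) + k) + A * B (n + m + k + 1)) := by
          gcongr ‖ℓ‖ * (?_ + ?_)
          exact hF.pow_mul_le n (m + 1) x
      _ = 2 * ‖ℓ‖ * A * B (n + m + (k + 1)) := by ring_nf

lemma norm_le_inv_one_add_sq (hF : WeightedDecay B k A F) (x : E) :
    ‖F x‖ ≤ A * (B k + B (k + 2)) * (1 + ‖x‖ ^ 2)⁻¹ := by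
  have h_zero := hF.pow_mul_le 0 0 x
  have h_two := hF.pow_mul_le 0 2 x
  rw [norm_iteratedFDeriv_zero] at h_zero h_two
  rw [← div_eq_mul_inv, le_div_iff₀ (by positivity)]
  simp only [zero_add, pow_zero, one_mul, add_comm 2 k] at h_zero h_two
  linarith

lemma pow_mul_norm_mul_norm_le {G' : Type*} [NormedAddCommGroup G'] [NormedSpace ℝ G']
    {F' : E' → G'} (hB : ∀ n, 0 ≤ B n) (hB_mul : ∀ i j, B i * B j ≤ B (i + j))
    (hF : WeightedDecay B k A F) (hF' : WeightedDecay B k' A' F') (i j m : ℕ) (p : E × E') :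
    ‖p‖ ^ m * (‖iteratedFDeriv ℝ i F p.1‖ * ‖iteratedFDeriv ℝ j F' p.2‖)
      ≤ A * A' * B (i + j + m + (k + k')) := by
  have h_mul {a b : ℕ} {s t : ℝ} (hs : s ≤ A * B a) (ht : t ≤ A' * B b) (ht₀ : 0 ≤ t) :
      s * t ≤ A * A' * B (a + b) :=
    calc s * t ≤ A * B a * (A' * B b) :=
          mul_le_mul hs ht ht₀ (mul_nonneg hF.const_nonneg (hB _))
      _ = A * A' * (B a * B b) := by ring
      _ ≤ A * A' * B (a + b) := by
          gcongr ?_ * ?_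
          · exact mul_nonneg hF.const_nonneg hF'.const_nonneg
          · exact hB_mul a b
  have h_zero := hF.pow_mul_le i 0 p.1
  have h_zero' := hF'.pow_mul_le j 0 p.2
  rw [pow_zero, one_mul] at h_zero h_zero'
  rcases max_choice ‖p.1‖ ‖p.2‖ with h_max | h_max <;> rw [Prod.norm_def, h_max]
  · rw [← mul_assoc]
    convert h_mul (hF.pow_mul_le i m p.1) h_zero' (norm_nonneg _) using 3
    omega
  · rw [mul_left_comm]
    convert h_mul h_zero (hF'.pow_mul_le j m p.2) (by positivity) using 3
    omega

lemma mul_fst_snd {R : Type*} [NormedRing R] [NormedAlgebra ℝ R] {f : E → R} {g : E' → R}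
    (hB : ∀ n, 0 ≤ B n) (hB_mul : ∀ i j, B i * B j ≤ B (i + j)) (hf : WeightedDecay B k A f)
    (hg : WeightedDecay B k' A' g) :
    WeightedDecay (fun j => 2 ^ j * B j) (k + k') (A * A') (fun p : E × E' => f p.1 * g p.2) where
  contDiff := (hf.contDiff.comp contDiff_fst).mul (hg.contDiff.comp contDiff_snd)
  const_nonneg := mul_nonneg hf.const_nonneg hg.const_nonneg
  pow_mul_le n m p := by
    have h_fst (i : ℕ) : ‖iteratedFDeriv ℝ i (fun q : E × E' => f q.1) p‖
        ≤ ‖iteratedFDeriv ℝ i f p.1‖ :=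
      norm_iteratedFDeriv_comp_clm_le (hf.contDiff.of_le (mod_cast le_top))
        (ContinuousLinearMap.norm_fst_le ℝ E E') p
    have h_snd (i : ℕ) : ‖iteratedFDeriv ℝ i (fun q : E × E' => g q.2) p‖
        ≤ ‖iteratedFDeriv ℝ i g p.2‖ :=
      norm_iteratedFDeriv_comp_clm_le (hg.contDiff.of_le (mod_cast le_top))
        (ContinuousLinearMap.norm_snd_le ℝ E E') p
    calc ‖p‖ ^ m * ‖iteratedFDeriv ℝ n (fun q : E × E' => f q.1 * g q.2) p‖
        ≤ ‖p‖ ^ m * ∑ i ∈ Finset.range (n + 1), (n.choose i : ℝ) *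
            ‖iteratedFDeriv ℝ i f p.1‖ * ‖iteratedFDeriv ℝ (n - i) g p.2‖ := by
          gcongr
          refine (norm_iteratedFDeriv_mul_le (hf.contDiff.comp contDiff_fst)
            (hg.contDiff.comp contDiff_snd) p (mod_cast le_top)).trans ?_
          gcongr
          · exact h_fst _
          · exact h_snd _
      _ ≤ ∑ i ∈ Finset.range (n + 1), n.choose i * (A * A' * B (n + m + (k + k'))) := by
          rw [Finset.mul_sum]
          refine Finset.sum_le_sum fun i hi => ?_
          rw [mul_assoc, mul_left_comm, ← Nat.add_sub_of_le (Finset.mem_range_succ_iff.mp hi),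
            Nat.add_sub_cancel_left]
          gcongr _ * ?_
          exact pow_mul_norm_mul_norm_le hB hB_mul hf hg i _ m p
      _ = A * A' * (2 ^ n * B (n + m + (k + k'))) := by
          rw [← Finset.sum_mul, ← Nat.cast_sum, Nat.sum_range_choose, Nat.cast_pow, Nat.cast_ofNat]
          ring
      _ ≤ A * A' * (2 ^ (n + m + (k + k')) * B (n + m + (k + k'))) := by
          gcongr ?_ * (?_ * ?_)
          · exact mul_nonneg hf.const_nonneg hg.const_nonneg
          · exact hB _
          · exact pow_le_pow_right₀ one_le_two (by omega)

end WeightedDecay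

end WeightedDecay

namespace GelfandShilov

variable {α : ℝ} {f : ℝ → ℂ}

lemma conj (hf : GelfandShilov α f) : GelfandShilov α fun x => (starRingEnd ℂ) (f x) := by
  obtain ⟨h_smooth, C, hC, M, hM, h⟩ := hf
  refine ⟨Complex.conjCLE.contDiff.comp h_smooth, C, hC, M, hM, fun n m x => ?_⟩
  have h_norm : ‖iteratedDeriv n (fun x => (starRingEnd ℂ) (f x)) x‖ = ‖iteratedDeriv n f x‖ := by
    simp only [← norm_iteratedFDeriv_eq_norm_iteratedDeriv]
    exact Complex.conjLIE.norm_iteratedFDeriv_comp_left f x n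
  rw [norm_mul, h_norm, ← norm_mul]
  exact h n m x

lemma exists_forall_weightedDecay (hα : 0 ≤ α) (hf : GelfandShilov α f) :
    ∃ A M₀, ∀ M ≥ M₀, WeightedDecay (gsWeight α M) 0 A f := by
  obtain ⟨h_smooth, C, hC, M₀, hM₀, h⟩ := hf
  refine ⟨C, M₀, fun M hM => ⟨h_smooth, hC.le, fun n m x => ?_⟩⟩
  have hM_pos : 0 < M := hM₀.trans_le hM
  have := powWeight_pos α n
  have := powWeight_pos α m
  calc ‖x‖ ^ m * ‖iteratedFDeriv ℝ n f x‖ = ‖(x : ℂ) ^ m * iteratedDeriv n f x‖ := by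
        rw [norm_iteratedFDeriv_eq_norm_iteratedDeriv, norm_mul, norm_pow, Complex.norm_real]
    _ ≤ C * M₀ ^ (n + m) * powWeight α n * powWeight α m := h n m x
    _ = C * (M₀ ^ (n + m) * (powWeight α n * powWeight α m)) := by ring
    _ ≤ C * gsWeight α M (n + m + 0) := by
        rw [add_zero, gsWeight]
        gcongr
        exact powWeight_mul_le_add hα n m

end GelfandShilov

section WignerTransform

/-- The integrand of `wignerTransform`. -/
noncomputable def wignerIntegrand (a b : ℝ) (F : ℝ × ℝ → ℂ) (p : ℝ × ℝ) (k : ℝ) : ℂ :=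
  Complex.exp (Complex.I * k * p.2) * F (p.1 + a * k, p.1 + b * k)

/-- The Wigner-type transform `(t, x) ↦ ∫ e^{ikx} F(t + ak, t + bk) dk` with slopes `a` and `b`,
defined for arbitrary functions `F` on the plane. For `a = -θ/2`, `b = θ/2` and
`F(u, v) = ψ(u) conj(φ(v))` it is `2π` times the Wigner distribution. -/
noncomputable def wignerTransform (a b : ℝ) (F : ℝ × ℝ → ℂ) (p : ℝ × ℝ) : ℂ :=
  ∫ k, wignerIntegrand a b F p k

/-- The integrable function of `k` which dominates, up to a constant, the decay of a function on
the plane along the line `k ↦ (t + ak, t + bk)`, uniformly in `t`. -/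
noncomputable def wignerMajorant (a b k : ℝ) : ℝ := (1 + ((b - a) / 2 * k) ^ 2)⁻¹

/-- The functional on the plane with value `t` at `(t + ak, t + bk)`. -/
noncomputable def timeCoord (a b : ℝ) : ℝ × ℝ →L[ℝ] ℝ :=
  (b - a)⁻¹ • (b • ContinuousLinearMap.fst ℝ ℝ ℝ - a • ContinuousLinearMap.snd ℝ ℝ ℝ)

/-- The functional on the plane with value `k` at `(t + ak, t + bk)`. -/
noncomputable def lagCoord (a b : ℝ) : ℝ × ℝ →L[ℝ] ℝ :=
  (b - a)⁻¹ • (ContinuousLinearMap.snd ℝ ℝ ℝ - ContinuousLinearMap.fst ℝ ℝ ℝ)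

/-- The functional `(t, x) ↦ t` on the plane, with complex values. -/
noncomputable def ofRealFst : ℝ × ℝ →L[ℝ] ℂ :=
  Complex.ofRealCLM.comp (ContinuousLinearMap.fst ℝ ℝ ℝ)

/-- The functional `(t, x) ↦ x` on the plane, with complex values. -/
noncomputable def ofRealSnd : ℝ × ℝ →L[ℝ] ℂ :=
  Complex.ofRealCLM.comp (ContinuousLinearMap.snd ℝ ℝ ℝ)

variable {a b : ℝ}

lemma timeCoord_apply_line (hab : a ≠ b) (t k : ℝ) : timeCoord a b (t + a * k, t + b * k) = t := by
  have : b - a ≠ 0 := sub_ne_zero.mpr hab.symm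
  simp only [timeCoord, smul_apply, sub_apply,
    ContinuousLinearMap.coe_fst', ContinuousLinearMap.coe_snd', smul_eq_mul]
  field_simp
  ring

lemma lagCoord_apply_line (hab : a ≠ b) (t k : ℝ) : lagCoord a b (t + a * k, t + b * k) = k := by
  have : b - a ≠ 0 := sub_ne_zero.mpr hab.symm
  simp only [lagCoord, smul_apply, sub_apply,
    ContinuousLinearMap.coe_fst', ContinuousLinearMap.coe_snd', smul_eq_mul]
  field_simp
  ring

lemma integrable_wignerMajorant (hab : a ≠ b) : Integrable (wignerMajorant a b) :=
  integrable_inv_one_add_sq.comp_mul_left'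
    (div_ne_zero (sub_ne_zero.mpr hab.symm) two_ne_zero)

lemma inv_one_add_sq_line_le_wignerMajorant (a b t k : ℝ) :
    (1 + ‖(t + a * k, t + b * k)‖ ^ 2)⁻¹ ≤ wignerMajorant a b k := by
  unfold wignerMajorant
  set q : ℝ × ℝ := (t + a * k, t + b * k) with hq
  have h_lag : |(b - a) / 2 * k| ≤ ‖q‖ := by
    have h_diff : (b - a) / 2 * k = (q.2 - q.1) / 2 := by simp only [hq]; ring
    have h_sub := norm_sub_le q.2 q.1
    have h_fst := norm_fst_le q
    have h_snd := norm_snd_le q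
    rw [Real.norm_eq_abs] at h_sub
    rw [h_diff, abs_div, abs_two]
    linarith
  gcongr (1 + ?_)⁻¹
  exact sq_le_sq' (abs_le.mp h_lag).1 (abs_le.mp h_lag).2

lemma wignerIntegrand_const_smul (c : ℂ) (F : ℝ × ℝ → ℂ) (p : ℝ × ℝ) (k : ℝ) :
    wignerIntegrand a b (c • F) p k = c * wignerIntegrand a b F p k :=
  mul_left_comm _ c _

lemma wignerTransform_const_smul (c : ℂ) (F : ℝ × ℝ → ℂ) (p : ℝ × ℝ) :
    wignerTransform a b (c • F) p = c * wignerTransform a b F p := by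
  simp only [wignerTransform, wignerIntegrand_const_smul, integral_const_mul]

lemma wignerIntegrand_timeCoord_smul (hab : a ≠ b) (F : ℝ × ℝ → ℂ) (p : ℝ × ℝ) (k : ℝ) :
    wignerIntegrand a b (fun q => timeCoord a b q • F q) p k = p.1 * wignerIntegrand a b F p k := by
  rw [wignerIntegrand, timeCoord_apply_line hab, Complex.real_smul, mul_left_comm, wignerIntegrand]

lemma wignerIntegrand_lagCoord_smul (hab : a ≠ b) (F : ℝ × ℝ → ℂ) (p : ℝ × ℝ) (k : ℝ) :
    wignerIntegrand a b (fun q => lagCoord a b q • F q) p k = k * wignerIntegrand a b F p k := by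
  rw [wignerIntegrand, lagCoord_apply_line hab, Complex.real_smul, mul_left_comm, wignerIntegrand]

lemma fst_mul_wignerTransform (hab : a ≠ b) (F : ℝ × ℝ → ℂ) (p : ℝ × ℝ) :
    p.1 * wignerTransform a b F p = wignerTransform a b (fun q => timeCoord a b q • F q) p := by
  simp only [wignerTransform, wignerIntegrand_timeCoord_smul hab, integral_const_mul]

section Decay

variable {B : ℕ → ℝ} {n : ℕ} {A : ℝ} {F : ℝ × ℝ → ℂ}

lemma norm_wignerIntegrand_le (a b : ℝ) (hB : ∀ n, 0 ≤ B n) (hF : WeightedDecay B n A F)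
    (p : ℝ × ℝ) (k : ℝ) :
    ‖wignerIntegrand a b F p k‖ ≤ A * (B n + B (n + 2)) * wignerMajorant a b k := by
  have h_exp : ‖Complex.exp (Complex.I * k * p.2)‖ = 1 := by
    rw [mul_assoc, mul_comm, ← Complex.ofReal_mul]
    exact Complex.norm_exp_ofReal_mul_I _
  rw [wignerIntegrand, norm_mul, h_exp, one_mul]
  refine (hF.norm_le_inv_one_add_sq _).trans ?_
  gcongr
  · exact mul_nonneg hF.const_nonneg (add_nonneg (hB _) (hB _))
  · exact inv_one_add_sq_line_le_wignerMajorant a b p.1 k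

lemma continuous_wignerIntegrand (a b : ℝ) (hF : Continuous F) (p : ℝ × ℝ) :
    Continuous (wignerIntegrand a b F p) := by
  unfold wignerIntegrand
  fun_prop

lemma integrable_wignerIntegrand (hab : a ≠ b) (hB : ∀ n, 0 ≤ B n) (hF : WeightedDecay B n A F)
    (p : ℝ × ℝ) : Integrable (wignerIntegrand a b F p) :=
  ((integrable_wignerMajorant hab).const_mul _).mono'
    (continuous_wignerIntegrand a b hF.contDiff.continuous p).aestronglyMeasurable
    (Eventually.of_forall (norm_wignerIntegrand_le a b hB hF p))

lemma norm_wignerTransform_le (hab : a ≠ b) (hB : ∀ n, 0 ≤ B n) (hF : WeightedDecay B n A F)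
    (p : ℝ × ℝ) :
    ‖wignerTransform a b F p‖ ≤ A * (B n + B (n + 2)) * ∫ k, wignerMajorant a b k := by
  rw [← integral_const_mul]
  exact norm_integral_le_of_norm_le ((integrable_wignerMajorant hab).const_mul _)
    (Eventually.of_forall (norm_wignerIntegrand_le a b hB hF p))

lemma snd_mul_wignerTransform (hab : a ≠ b) (hB : ∀ n, 0 ≤ B n) (hF : WeightedDecay B n A F)
    (p : ℝ × ℝ) :
    p.2 * wignerTransform a b F p = wignerTransform a b (Complex.I • dirDeriv (a, b) F) p := by
  have h_deriv (k : ℝ) : HasDerivAt (wignerIntegrand a b F p)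
      (Complex.I * p.2 * wignerIntegrand a b F p k
        + wignerIntegrand a b (dirDeriv (a, b) F) p k) k := by
    have h_exp := ((Complex.ofRealCLM.hasDerivAt (x := k)).const_mul Complex.I
      |>.mul_const (p.2 : ℂ)).cexp
    have h_line : HasDerivAt (fun k : ℝ => (p.1 + a * k, p.1 + b * k)) (a, b) k := by
      simpa using (((hasDerivAt_id k).const_mul a).const_add p.1).prodMk
        (((hasDerivAt_id k).const_mul b).const_add p.1)
    have h_F := (hF.contDiff.differentiable (by simp) _).hasFDerivAt.comp_hasDerivAt k h_line
    refine (h_exp.mul h_F).congr_deriv ?_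
    simp [wignerIntegrand, dirDeriv]
    ring
  have h_int := (integrable_wignerIntegrand hab hB hF p).const_mul (Complex.I * p.2)
  have h_int' := integrable_wignerIntegrand hab hB (hF.dirDeriv (a, b)) p
  have h_parts := integral_eq_zero_of_hasDerivAt_of_integrable h_deriv (h_int.add h_int')
    (integrable_wignerIntegrand hab hB hF p)
  rw [integral_add h_int h_int', integral_const_mul] at h_parts
  rw [wignerTransform_const_smul, wignerTransform, wignerTransform]
  linear_combination (-Complex.I) * h_parts +
    p.2 * (∫ k, wignerIntegrand a b F p k) * Complex.I_sq

lemma hasFDerivAt_wignerIntegrand (hab : a ≠ b) (hF : Differentiable ℝ F) (p : ℝ × ℝ) (k : ℝ) :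
    HasFDerivAt (fun q => wignerIntegrand a b F q k)
      (wignerIntegrand a b (dirDeriv (1, 1) F) p k • ofRealFst +
        wignerIntegrand a b (Complex.I • fun q => lagCoord a b q • F q) p k • ofRealSnd) p := by
  have h_exp := ((ofRealSnd.hasFDerivAt (x := p)).const_mul (Complex.I * k)).cexp
  have h_line : HasFDerivAt (fun q : ℝ × ℝ => (q.1 + a * k, q.1 + b * k))
      ((ContinuousLinearMap.fst ℝ ℝ ℝ).prod (ContinuousLinearMap.fst ℝ ℝ ℝ)) p :=
    (hasFDerivAt_fst.add_const _).prodMk (hasFDerivAt_fst.add_const _)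
  have h_F := (hF (p.1 + a * k, p.1 + b * k)).hasFDerivAt.comp p h_line
  rw [wignerIntegrand_const_smul, wignerIntegrand_lagCoord_smul hab]
  refine (h_exp.mul h_F).congr_fderiv ?_
  ext
  · simp [wignerIntegrand, dirDeriv, ofRealFst, ofRealSnd]
  · simp [wignerIntegrand, dirDeriv, ofRealFst, ofRealSnd, ← Prod.zero_eq_mk]
    ring

lemma hasFDerivAt_wignerTransform (hab : a ≠ b) (hB : IsStableWeight B)
    (hF : WeightedDecay B n A F) (p : ℝ × ℝ) :
    HasFDerivAt (wignerTransform a b F)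
      (wignerTransform a b (dirDeriv (1, 1) F) p • ofRealFst +
        wignerTransform a b (Complex.I • fun q => lagCoord a b q • F q) p • ofRealSnd) p := by
  have hF_time := hF.dirDeriv (1, 1)
  have hF_lag := (hF.clm_smul hB (lagCoord a b)).const_smul Complex.I
  have h_int_time := (integrable_wignerIntegrand hab hB.nonneg hF_time p).smul_const ofRealFst
  have h_int_lag := (integrable_wignerIntegrand hab hB.nonneg hF_lag p).smul_const ofRealSnd
  obtain ⟨C_time, h_time⟩ : ∃ C, ∀ q k,
      ‖wignerIntegrand a b (dirDeriv (1, 1) F) q k‖ ≤ C * wignerMajorant a b k :=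
    ⟨_, norm_wignerIntegrand_le a b hB.nonneg hF_time⟩
  obtain ⟨C_lag, h_lag⟩ : ∃ C, ∀ q k,
      ‖wignerIntegrand a b (Complex.I • fun q => lagCoord a b q • F q) q k‖
        ≤ C * wignerMajorant a b k :=
    ⟨_, norm_wignerIntegrand_le a b hB.nonneg hF_lag⟩
  have h_majorant := integrable_wignerMajorant hab
  have h_integral := integral_add h_int_time h_int_lag
  rw [integral_smul_const, integral_smul_const] at h_integral
  refine HasFDerivAt.congr_fderiv ?_ h_integral
  refine hasFDerivAt_integral_of_dominated_of_fderiv_le univ_mem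
    (Eventually.of_forall fun q =>
      (continuous_wignerIntegrand a b hF.contDiff.continuous q).aestronglyMeasurable)
    (integrable_wignerIntegrand hab hB.nonneg hF p)
    (h_int_time.add h_int_lag).aestronglyMeasurable
    (Eventually.of_forall fun k q _ => ?_)
    (((h_majorant.const_mul C_time).mul_const ‖ofRealFst‖).add
      ((h_majorant.const_mul C_lag).mul_const ‖ofRealSnd‖))
    (Eventually.of_forall fun k q _ =>
      hasFDerivAt_wignerIntegrand hab (hF.contDiff.differentiable (by simp)) q k)
  refine (norm_add_le _ _).trans ?_
  rw [norm_smul, norm_smul]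
  exact add_le_add (mul_le_mul_of_nonneg_right (h_time q k) (norm_nonneg _))
    (mul_le_mul_of_nonneg_right (h_lag q k) (norm_nonneg _))

lemma ptOp_wignerTransform (hab : a ≠ b) (hB : IsStableWeight B) (hF : WeightedDecay B n A F) :
    ptOp (wignerTransform a b F) = wignerTransform a b (dirDeriv (1, 1) F) := by
  funext p
  have h_deriv := (hasFDerivAt_wignerTransform hab hB hF p).comp_hasDerivAt p.1
    ((hasDerivAt_id p.1).prodMk (hasDerivAt_const p.1 p.2))
  exact h_deriv.deriv.trans (by simp [ofRealFst, ofRealSnd])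

lemma pxOp_wignerTransform (hab : a ≠ b) (hB : IsStableWeight B) (hF : WeightedDecay B n A F) :
    pxOp (wignerTransform a b F)
      = wignerTransform a b (Complex.I • fun q => lagCoord a b q • F q) := by
  funext p
  have h_deriv := (hasFDerivAt_wignerTransform hab hB hF p).comp_hasDerivAt p.2
    ((hasDerivAt_const p.2 p.1).prodMk (hasDerivAt_id p.2))
  exact h_deriv.deriv.trans (by simp [ofRealFst, ofRealSnd])

lemma contDiff_wignerTransform (hab : a ≠ b) (hB : IsStableWeight B)
    (hF : WeightedDecay B n A F) : ContDiff ℝ (⊤ : ℕ∞) (wignerTransform a b F) := by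
  refine contDiff_iff_forall_nat_le.mpr fun m _ => ?_
  induction m generalizing n A F with
  | zero =>
    exact contDiff_zero.mpr (continuous_iff_continuousAt.mpr fun p =>
      (hasFDerivAt_wignerTransform hab hB hF p).continuousAt)
  | succ m ih =>
    have h_time := ih (hF.dirDeriv (1, 1)) (mod_cast le_top)
    have h_lag := ih ((hF.clm_smul hB (lagCoord a b)).const_smul Complex.I) (mod_cast le_top)
    exact contDiff_succ_iff_hasFDerivAt.mpr
      ⟨_, (h_time.smul contDiff_const).add (h_lag.smul contDiff_const),
        hasFDerivAt_wignerTransform hab hB hF⟩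

end Decay

/-- `IsWignerTransform a b B k A W` says that `W` is the Wigner-type transform with slopes `a` and
`b` of some function in the class `WeightedDecay B k A`. -/
def IsWignerTransform (a b : ℝ) (B : ℕ → ℝ) (k : ℕ) (A : ℝ) (W : ℝ × ℝ → ℂ) : Prop :=
  ∃ F, WeightedDecay B k A F ∧ W = wignerTransform a b F

namespace IsWignerTransform

variable {B : ℕ → ℝ} {k : ℕ} {A K L : ℝ} {W : ℝ × ℝ → ℂ}

lemma ofRealFst_mul (hab : a ≠ b) (hB : IsStableWeight B) (hW : IsWignerTransform a b B k A W) :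
    IsWignerTransform a b B (k + 1) (2 * ‖timeCoord a b‖ * A) (ofRealFst * W) := by
  obtain ⟨F, hF, rfl⟩ := hW
  exact ⟨_, hF.clm_smul hB (timeCoord a b), funext (fst_mul_wignerTransform hab F)⟩

lemma ofRealSnd_mul (hab : a ≠ b) (hB : IsStableWeight B) (hW : IsWignerTransform a b B k A W) :
    IsWignerTransform a b B (k + 1) (‖(a, b)‖ * A) (ofRealSnd * W) := by
  obtain ⟨F, hF, rfl⟩ := hW
  refine ⟨_, ?_, funext (snd_mul_wignerTransform hab hB.nonneg hF)⟩
  simpa only [Complex.norm_I, one_mul] using (hF.dirDeriv (a, b)).const_smul Complex.I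

protected lemma ptOp (hab : a ≠ b) (hB : IsStableWeight B) (hW : IsWignerTransform a b B k A W) :
    IsWignerTransform a b B (k + 1) A (ptOp W) := by
  obtain ⟨F, hF, rfl⟩ := hW
  refine ⟨_, ?_, ptOp_wignerTransform hab hB hF⟩
  have h_norm : ‖((1, 1) : ℝ × ℝ)‖ = 1 := by simp [Prod.norm_def]
  simpa only [h_norm, one_mul] using hF.dirDeriv (1, 1)

protected lemma pxOp (hab : a ≠ b) (hB : IsStableWeight B) (hW : IsWignerTransform a b B k A W) :
    IsWignerTransform a b B (k + 1) (2 * ‖lagCoord a b‖ * A) (pxOp W) := by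
  obtain ⟨F, hF, rfl⟩ := hW
  refine ⟨_, ?_, pxOp_wignerTransform hab hB hF⟩
  simpa only [Complex.norm_I, one_mul] using
    (hF.clm_smul hB (lagCoord a b)).const_smul Complex.I

lemma mono_mul (hB : ∀ n, 0 ≤ B n) (hA : 0 ≤ A) (hKL : L ≤ K)
    (hW : IsWignerTransform a b B k (L * A) W) : IsWignerTransform a b B k (K * A) W := by
  obtain ⟨F, hF, hW⟩ := hW
  exact ⟨F, hF.mono hB (by gcongr), hW⟩

lemma const_nonneg (hW : IsWignerTransform a b B k A W) : 0 ≤ A :=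
  let ⟨_, hF, _⟩ := hW
  hF.const_nonneg

lemma iterate {O : (ℝ × ℝ → ℂ) → ℝ × ℝ → ℂ}
    (hO : ∀ {k A W}, IsWignerTransform a b B k A W → IsWignerTransform a b B (k + 1) (L * A) (O W))
    (hB : ∀ n, 0 ≤ B n) (hKL : L ≤ K) (hW : IsWignerTransform a b B k A W) (n : ℕ) :
    IsWignerTransform a b B (k + n) (K ^ n * A) (O^[n] W) := by
  induction n with
  | zero => simpa using hW
  | succ n ih =>
    rw [Function.iterate_succ_apply', pow_succ', mul_assoc]
    exact (hO ih).mono_mul hB ih.const_nonneg hKL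

lemma exists_forall_iterate (hab : a ≠ b) (hB : IsStableWeight B) :
    ∃ K > 0, ∀ {A W}, IsWignerTransform a b B 0 A W → ∀ n₁ n₂ m₁ m₂ : ℕ,
      IsWignerTransform a b B (n₁ + n₂ + m₁ + m₂) (K ^ (n₁ + n₂ + m₁ + m₂) * A)
        (ofRealFst ^ m₁ * (ofRealSnd ^ m₂ * ptOp^[n₁] (pxOp^[n₂] W))) := by
  obtain ⟨K, hK⟩ : ∃ K, ∀ L ∈ ({1, 2 * ‖timeCoord a b‖, ‖(a, b)‖, 2 * ‖lagCoord a b‖} : Set ℝ),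
      L ≤ K := Set.Finite.bddAbove (by simp)
  simp only [Set.mem_insert_iff, Set.mem_singleton_iff, forall_eq_or_imp, forall_eq] at hK
  obtain ⟨hK_t, hK_fst, hK_snd, hK_x⟩ := hK
  refine ⟨K, by linarith, fun {A W} hW n₁ n₂ m₁ m₂ => ?_⟩
  have h_x := hW.iterate (IsWignerTransform.pxOp hab hB) hB.nonneg hK_x n₂
  have h_t := h_x.iterate (fun h => by simpa only [one_mul] using h.ptOp hab hB) hB.nonneg hK_t n₁
  have h_snd := h_t.iterate (ofRealSnd_mul hab hB) hB.nonneg hK_snd m₂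
  have h_fst := h_snd.iterate (ofRealFst_mul hab hB) hB.nonneg hK_fst m₁
  rw [mul_left_iterate, mul_left_iterate] at h_fst
  convert h_fst using 1
  · ring
  · ring

end IsWignerTransform

lemma gelfandShilov2_wignerTransform {α M A : ℝ} {F : ℝ × ℝ → ℂ} (hα : 1 / 2 ≤ α) (hM : 1 ≤ M)
    (hab : a ≠ b) (hF : WeightedDecay (gsWeight α M) 0 A F) :
    GelfandShilov2 α (wignerTransform a b F) := by
  have hB := isStableWeight_gsWeight hα hM
  have hA := hF.const_nonneg
  obtain ⟨K, hK, h_iterate⟩ := IsWignerTransform.exists_forall_iterate hab hB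
  obtain ⟨D, hD, L, hL, h_weight⟩ :=
    exists_gsWeight_add_gsWeight_le (show 0 ≤ α by linarith) (show 0 < M by linarith)
  set I := ∫ k, wignerMajorant a b k
  have hI : 0 ≤ I := integral_nonneg fun k => by unfold wignerMajorant; positivity
  refine ⟨contDiff_wignerTransform hab hB hF, A * D * I + 1, by positivity, K * L, by positivity,
    fun n₁ n₂ m₁ m₂ p => ?_⟩
  obtain ⟨G, hG, hG_eq⟩ := h_iterate ⟨F, hF, rfl⟩ n₁ n₂ m₁ m₂
  have hG_apply : (p.1 : ℂ) ^ m₁ * (p.2 : ℂ) ^ m₂ *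
      ptOp^[n₁] (pxOp^[n₂] (wignerTransform a b F)) p = wignerTransform a b G p := by
    rw [mul_assoc, ← hG_eq]
    rfl
  set N := n₁ + n₂ + m₁ + m₂
  rw [hG_apply]
  calc ‖wignerTransform a b G p‖
      ≤ K ^ N * A * (gsWeight α M N + gsWeight α M (N + 2)) * I :=
        norm_wignerTransform_le hab hB.nonneg hG p
    _ ≤ K ^ N * A * (D * L ^ N * powWeight α n₁ * powWeight α n₂ * powWeight α m₁
          * powWeight α m₂) * I := by
        gcongr
        exact h_weight n₁ n₂ m₁ m₂
    _ = A * D * I * ((K * L) ^ N * powWeight α n₁ * powWeight α n₂ * powWeight α m₁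
          * powWeight α m₂) := by ring
    _ ≤ (A * D * I + 1) * ((K * L) ^ N * powWeight α n₁ * powWeight α n₂ * powWeight α m₁
          * powWeight α m₂) := by
        gcongr ?_ * _
        · unfold powWeight; positivity
        · exact le_add_of_nonneg_right zero_le_one
    _ = _ := by unfold powWeight; ring

end WignerTransform

lemma GelfandShilov.exists_weightedDecay_mul {α : ℝ} {f g : ℝ → ℂ} (hα : 0 ≤ α)
    (hf : GelfandShilov α f) (hg : GelfandShilov α g) :
    ∃ A, ∃ M ≥ 1, WeightedDecay (gsWeight α M) 0 A fun p : ℝ × ℝ => f p.1 * g p.2 := by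
  obtain ⟨A, M, hf⟩ := hf.exists_forall_weightedDecay hα
  obtain ⟨A', M', hg⟩ := hg.exists_forall_weightedDecay hα
  set N := max 1 (max M M')
  have hN : 1 ≤ N := le_max_left _ _
  have hMN : M ≤ N := (le_max_left M M').trans (le_max_right _ _)
  have hMN' : M' ≤ N := (le_max_right M M').trans (le_max_right _ _)
  refine ⟨A * A', 2 * N, by linarith, ?_⟩
  rw [← funext (two_pow_mul_gsWeight α N)]
  exact (hf N hMN).mul_fst_snd (gsWeight_nonneg (by linarith))
    (gsWeight_mul_le_add hα (by linarith)) (hg N hMN')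

theorem wigner_gelfandShilov_general {α a b : ℝ} (hα : 1 / 2 ≤ α) (hab : a ≠ b) {f g : ℝ → ℂ}
    (hf : GelfandShilov α f) (hg : GelfandShilov α g) :
    (∀ t x : ℝ, Integrable fun k : ℝ =>
        Complex.exp (Complex.I * k * x) * f (t + a * k) * g (t + b * k))
      ∧ GelfandShilov2 α fun p : ℝ × ℝ => ((1 / (2 * Real.pi) : ℝ) : ℂ) *
          ∫ k : ℝ, Complex.exp (Complex.I * k * p.2) * f (p.1 + a * k) * g (p.1 + b * k) := by
  obtain ⟨A, M, hM, hF⟩ := hf.exists_weightedDecay_mul (by linarith) hg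
  have hB := (isStableWeight_gsWeight hα hM).nonneg
  simp only [mul_assoc (Complex.exp _)]
  refine ⟨fun t x => integrable_wignerIntegrand hab hB hF (t, x), ?_⟩
  convert gelfandShilov2_wignerTransform hα hM hab
    (hF.const_smul ((1 / (2 * Real.pi) : ℝ) : ℂ)) using 1
  exact funext fun p =>
    (wignerTransform_const_smul _ (fun q : ℝ × ℝ => f q.1 * g q.2) p).symm

/-- for `ψ, φ ∈ S^α_α(ℝ)` the Wigner distribution
`W(t,x) = (1/2π) ∫ e^{ikx} ψ(t − θk/2) conj(φ(t + θk/2)) dk` is given by an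
absolutely convergent integral and belongs to `S^α_α(ℝ²)`. -/
theorem wigner_gelfandShilov (α θ : ℝ) (hα : 1 / 2 ≤ α) (hθ : 0 < θ)
    (ψ φ : ℝ → ℂ) (hψ : GelfandShilov α ψ) (hφ : GelfandShilov α φ) :
    (∀ t x : ℝ, Integrable (fun k : ℝ =>
        Complex.exp (Complex.I * (k : ℂ) * (x : ℂ)) * ψ (t - θ * k / 2) *
          (starRingEnd ℂ) (φ (t + θ * k / 2))))
      ∧ GelfandShilov2 α (fun p : ℝ × ℝ =>
          ((1 / (2 * Real.pi) : ℝ) : ℂ) *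
            ∫ k : ℝ, Complex.exp (Complex.I * (k : ℂ) * (p.2 : ℂ)) *
              ψ (p.1 - θ * k / 2) * (starRingEnd ℂ) (φ (p.1 + θ * k / 2))) := by
  have h_slopes : -(θ / 2) ≠ θ / 2 := by linarith
  have h_minus (t k : ℝ) : t - θ * k / 2 = t + -(θ / 2) * k := by ring
  have h_plus (t k : ℝ) : t + θ * k / 2 = t + θ / 2 * k := by ring
  simp only [h_minus, h_plus]
  exact wigner_gelfandShilov_general hα h_slopes hψ hφ.conj
end
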